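/- Let X be a locally compact CAT(0) 2-complex and let c be a simple closed geodesic in ∂_T X of length strictly less than 4π. Then for every x ∈ supp(c), the loop log_x(c) is freely homotopic in Link(X,x) to a simple closed geodesic in Link(X,x). -/

import Mathlib

open Set

noncomputable section

namespace CAT0SC

universe u

variable {X : Type u} [MetricSpace X]

/-! ### Basic geodesic notions -/

/-- `f` is a unit-speed (minimal) geodesic on the set `s ⊆ ℝ`. -/
def IsGeodesicOn (f : ℝ → X) (s : Set ℝ) : Prop :=
  ∀ a ∈ s, ∀ b ∈ s, dist (f a) (f b) = |a - b|

/-- A geodesic ray, parametrized on `[0, ∞)`. -/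
def IsRay (f : ℝ → X) : Prop := IsGeodesicOn f (Set.Ici 0)

/-- A complete geodesic (line), parametrized on all of `ℝ`. -/
def IsCompleteGeodesic (f : ℝ → X) : Prop := IsGeodesicOn f Set.univ

/-- A geodesic segment from `x` to `y`, parametrized on `[0, dist x y]`. -/
def IsGeodesicSegment (f : ℝ → X) (x y : X) : Prop :=
  IsGeodesicOn f (Set.Icc 0 (dist x y)) ∧ f 0 = x ∧ f (dist x y) = y

/-- `m` is a midpoint of `x` and `y`. -/
def IsMidpoint (m x y : X) : Prop :=
  dist x m = dist x y / 2 ∧ dist m y = dist x y / 2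

/-- A metric space is CAT(0) iff it is geodesic and satisfies the CN-inequality of
Bruhat--Tits. -/
def IsCAT0 (Y : Type*) [MetricSpace Y] : Prop :=
  (∀ x y : Y, ∃ f : ℝ → Y, IsGeodesicSegment f x y) ∧
  (∀ x y z m : Y, IsMidpoint m y z →
    dist x m ^ 2 ≤ dist x y ^ 2 / 2 + dist x z ^ 2 / 2 - dist y z ^ 2 / 4)

/-- A subset is convex if it contains every geodesic segment between its points. -/
def IsConvexSubset (A : Set X) : Prop :=
  ∀ x ∈ A, ∀ y ∈ A, ∀ f : ℝ → X, IsGeodesicSegment f x y →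
    ∀ t ∈ Set.Icc 0 (dist x y), f t ∈ A

/-! ### The ideal boundary -/

/-- Two rays are asymptotic if they are at bounded distance. -/
def Asymptotic (f g : ℝ → X) : Prop := ∃ C : ℝ, ∀ t ≥ (0 : ℝ), dist (f t) (g t) ≤ C

/-- The type of geodesic rays in `X`. -/
def GeodesicRay (X : Type u) [MetricSpace X] : Type u := {f : ℝ → X // IsRay f}

/-- Asymptoty as an equivalence relation on rays. -/
def raySetoid (X : Type u) [MetricSpace X] : Setoid (GeodesicRay X) where
  r f g := Asymptotic f.1 g.1
  iseqv := by
    constructor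
    · intro f
      exact ⟨0, fun t _ => by simp⟩
    · rintro f g ⟨C, hC⟩
      exact ⟨C, fun t ht => by rw [dist_comm]; exact hC t ht⟩
    · rintro f g h ⟨C, hC⟩ ⟨D, hD⟩
      exact ⟨C + D, fun t ht =>
        le_trans (dist_triangle _ (g.1 t) _) (add_le_add (hC t ht) (hD t ht))⟩

/-- The ideal boundary of `X`: asymptote classes of geodesic rays. -/
def IdealBoundary (X : Type u) [MetricSpace X] : Type u := Quotient (raySetoid X)

/-- The boundary point determined by a ray. -/
def rayClass {f : ℝ → X} (hf : IsRay f) : IdealBoundary X :=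
  Quotient.mk (raySetoid X) ⟨f, hf⟩

/-- `f` is a ray belonging to the asymptote class `ξ`. -/
def RepresentsRay (f : ℝ → X) (ξ : IdealBoundary X) : Prop :=
  ∃ hf : IsRay f, rayClass hf = ξ

/-- The complete geodesic `c` has the ideal points `ξ` (forward) and `η` (backward) as its two
endpoints. -/
def HasEndpoints (c : ℝ → X) (ξ η : IdealBoundary X) : Prop :=
  IsCompleteGeodesic c ∧ RepresentsRay (fun t => c t) ξ ∧ RepresentsRay (fun t => c (-t)) η

/-- There is a complete geodesic in `X` with `ξ` and `η` as its endpoints. -/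
def EndpointsJoined (ξ η : IdealBoundary X) : Prop := ∃ c : ℝ → X, HasEndpoints c ξ η

/-! ### Hyperbolic isometries -/

/-- `c` is an axis of the isometry `g`, with translation length `l > 0`. -/
def IsAxis (g : X ≃ᵢ X) (c : ℝ → X) (l : ℝ) : Prop :=
  IsCompleteGeodesic c ∧ 0 < l ∧ ∀ t : ℝ, g (c t) = c (t + l)

/-- A hyperbolic isometry: one translating a complete geodesic. -/
def IsHyperbolic (g : X ≃ᵢ X) : Prop := ∃ c l, IsAxis g c l

/-- `ξ = g(+∞)`, the forward endpoint of the axes of `g`. -/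
def ForwardFixedPoint (g : X ≃ᵢ X) (ξ : IdealBoundary X) : Prop :=
  ∃ c l, IsAxis g c l ∧ RepresentsRay (fun t => c t) ξ

/-- `ξ = g(-∞)`, the backward endpoint of the axes of `g`. -/
def BackwardFixedPoint (g : X ≃ᵢ X) (ξ : IdealBoundary X) : Prop :=
  ∃ c l, IsAxis g c l ∧ RepresentsRay (fun t => c (-t)) ξ

/-- `ξ ∈ {g(+∞), g(-∞)}`. -/
def IsPoleOf (g : X ≃ᵢ X) (ξ : IdealBoundary X) : Prop :=
  ForwardFixedPoint g ξ ∨ BackwardFixedPoint g ξ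

/-! ### Angles -/

/-- The Euclidean comparison angle at `p` between `x` and `y`. -/
def compAngle (p x y : X) : ℝ :=
  Real.arccos ((dist p x ^ 2 + dist p y ^ 2 - dist x y ^ 2) / (2 * dist p x * dist p y))

/-- The (Alexandrov) angle `∠ₓ(y, z)`.  In a CAT(0) space the comparison angle is monotone
along the geodesics, so the limit defining the angle equals the infimum used here. -/
def angleAt (x y z : X) : ℝ :=
  sInf {θ : ℝ | ∃ (f g : ℝ → X) (s t : ℝ), IsGeodesicSegment f x y ∧ IsGeodesicSegment g x z ∧
    0 < s ∧ s ≤ dist x y ∧ 0 < t ∧ t ≤ dist x z ∧ θ = compAngle x (f s) (g t)}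

/-! ### The Tits metric -/

/-- The Tits angle between two boundary points: the limit (= supremum, by monotonicity and
independence of base point) of comparison angles between rays representing them. -/
def titsAngle (ξ η : IdealBoundary X) : ℝ :=
  sSup {θ : ℝ | ∃ (f g : ℝ → X) (hf : IsRay f) (hg : IsRay g) (t : ℝ),
    f 0 = g 0 ∧ rayClass hf = ξ ∧ rayClass hg = η ∧ 0 < t ∧ θ = compAngle (f 0) (f t) (g t)}

/-- Continuity of a curve with respect to a (not necessarily symmetric) distance function. -/
def RhoContinuousOn {α : Type*} (ρ : α → α → ENNReal) (γ : ℝ → α) (a b : ℝ) : Prop :=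
  ∀ t ∈ Set.Icc a b, ∀ ε : ENNReal, 0 < ε → ∃ δ : ℝ, 0 < δ ∧ ∀ s ∈ Set.Icc a b,
    |s - t| < δ → ρ (γ s) (γ t) < ε ∧ ρ (γ t) (γ s) < ε

/-- The length of a curve `γ : [a,b] → α` with respect to the distance function `ρ`:
the supremum of sums over monotone partitions. -/
def rhoLength {α : Type*} (ρ : α → α → ENNReal) (γ : ℝ → α) (a b : ℝ) : ENNReal :=
  ⨆ n : ℕ, ⨆ c : {c : Fin (n + 1) → ℝ // Monotone c ∧ ∀ i, c i ∈ Set.Icc a b},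
    ∑ i : Fin n, ρ (γ (c.1 i.castSucc)) (γ (c.1 i.succ))

/-- The intrinsic (path/length) metric induced by a distance function `ρ`:
the infimum of lengths of continuous curves joining two points. -/
def lengthDist {α : Type*} (ρ : α → α → ENNReal) (x y : α) : ENNReal :=
  ⨅ γ : {γ : ℝ → α // γ 0 = x ∧ γ 1 = y ∧ RhoContinuousOn ρ γ 0 1}, rhoLength ρ γ.1 0 1

/-- The Tits metric on the ideal boundary: the path metric induced by the Tits angle. -/
def titsDist (ξ η : IdealBoundary X) : ENNReal :=
  lengthDist (fun a b => ENNReal.ofReal (titsAngle a b)) ξ η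

/-- `σ` is a minimal (unit-speed) geodesic for the Tits metric on the set `s`. -/
def TitsMinGeodesicOn (σ : ℝ → IdealBoundary X) (s : Set ℝ) : Prop :=
  ∀ a ∈ s, ∀ b ∈ s, titsDist (σ a) (σ b) = ENNReal.ofReal |a - b|

/-- `σ` is a (local) geodesic for the Tits metric on the set `s`. -/
def TitsGeodesicOn (σ : ℝ → IdealBoundary X) (s : Set ℝ) : Prop :=
  ∀ t ∈ s, ∃ δ : ℝ, 0 < δ ∧ TitsMinGeodesicOn σ (s ∩ Set.Icc (t - δ) (t + δ))

/-- A terminal point of the Tits boundary: one lying in the interior of no geodesic segment. -/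
def IsTerminalPoint (ξ : IdealBoundary X) : Prop :=
  ¬ ∃ (σ : ℝ → IdealBoundary X) (a b t : ℝ), a < t ∧ t < b ∧
      TitsMinGeodesicOn σ (Set.Icc a b) ∧ σ t = ξ

/-- A closed geodesic of length `L` in the Tits boundary. -/
def IsClosedTitsGeodesic (σ : ℝ → IdealBoundary X) (L : ℝ) : Prop :=
  0 < L ∧ (∀ t, σ (t + L) = σ t) ∧
  ∀ t : ℝ, ∃ δ : ℝ, 0 < δ ∧ TitsMinGeodesicOn σ (Set.Icc (t - δ) (t + δ))

/-- A simple closed geodesic of length `L` in the Tits boundary. -/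
def IsSimpleClosedTitsGeodesic (σ : ℝ → IdealBoundary X) (L : ℝ) : Prop :=
  IsClosedTitsGeodesic σ L ∧ Set.InjOn σ (Set.Ico 0 L)

/-- The ideal boundary of a subset `A ⊆ X`: classes of rays staying in `A`. -/
def SubsetBoundary (A : Set X) : Set (IdealBoundary X) :=
  {ξ | ∃ (f : ℝ → X) (hf : IsRay f), rayClass hf = ξ ∧ ∀ t : ℝ, 0 ≤ t → f t ∈ A}

/-! ### Links (spaces of directions) -/

/-- A germ of a unit-speed geodesic emanating from `x`. -/
def IsGeodGermFrom (x : X) (f : ℝ → X) : Prop :=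
  f 0 = x ∧ ∃ ε : ℝ, 0 < ε ∧ IsGeodesicOn f (Set.Icc 0 ε)

/-- The type of geodesic germs at `x`. -/
def GermFrom (x : X) : Type u := {f : ℝ → X // IsGeodGermFrom x f}

/-- Two germs define the same direction iff they coincide on an initial interval. -/
def germSetoid (x : X) : Setoid (GermFrom x) where
  r f g := ∃ ε : ℝ, 0 < ε ∧ ∀ t ∈ Set.Icc (0 : ℝ) ε, f.1 t = g.1 t
  iseqv := by
    constructor
    · intro f; exact ⟨1, one_pos, fun t _ => rfl⟩
    · rintro f g ⟨ε, hε, h⟩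
      exact ⟨ε, hε, fun t ht => (h t ht).symm⟩
    · rintro f g h ⟨ε₁, hε₁, h₁⟩ ⟨ε₂, hε₂, h₂⟩
      exact ⟨min ε₁ ε₂, lt_min hε₁ hε₂, fun t ht =>
        (h₁ t ⟨ht.1, le_trans ht.2 (min_le_left _ _)⟩).trans
          (h₂ t ⟨ht.1, le_trans ht.2 (min_le_right _ _)⟩)⟩

/-- The link of `X` at `x` (the space of directions): germs of geodesics from `x` up to
initial coincidence. -/
def LinkSpace (x : X) : Type u := Quotient (germSetoid x)

/-- The direction determined by a geodesic germ. -/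
def germClass {x : X} {f : ℝ → X} (hf : IsGeodGermFrom x f) : LinkSpace x :=
  Quotient.mk (germSetoid x) ⟨f, hf⟩

/-- The angle between two directions at `x` (computed from comparison angles, which are
monotone, so the infimum gives the Alexandrov angle). -/
def linkAngle (x : X) (u v : LinkSpace x) : ℝ :=
  sInf {θ : ℝ | ∃ (f g : ℝ → X) (hf : IsGeodGermFrom x f) (hg : IsGeodGermFrom x g)
    (s t εf εg : ℝ), germClass hf = u ∧ germClass hg = v ∧
    0 < s ∧ s ≤ εf ∧ 0 < t ∧ t ≤ εg ∧ IsGeodesicOn f (Set.Icc 0 εf) ∧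
    IsGeodesicOn g (Set.Icc 0 εg) ∧ θ = compAngle x (f s) (g t)}

/-- The link metric `d_x`: the path metric on the space of directions induced by the angle. -/
def linkDist (x : X) (u v : LinkSpace x) : ENNReal :=
  lengthDist (fun a b => ENNReal.ofReal (linkAngle x a b)) u v

/-- The metric topology on the link. -/
instance linkTopology (x : X) : TopologicalSpace (LinkSpace x) :=
  TopologicalSpace.generateFrom
    {B | ∃ (u : LinkSpace x) (ε : ENNReal), 0 < ε ∧ B = {v | linkDist x u v < ε}}

/-- The two directions of the curve `c` at the interior point `c t₀` are at link distance
exactly `π`. -/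
def OppositeDirectionsAt (c : ℝ → X) (t₀ : ℝ) : Prop :=
  ∃ (hf : IsGeodGermFrom (c t₀) (fun s => c (t₀ + s)))
    (hg : IsGeodGermFrom (c t₀) (fun s => c (t₀ - s))),
    linkDist (c t₀) (germClass hf) (germClass hg) = ENNReal.ofReal Real.pi

/-- An R-geodesic: a geodesic such that at every interior point the incoming and outgoing
directions are at link distance exactly `π`. -/
def IsRGeodesicOn (c : ℝ → X) (s : Set ℝ) : Prop :=
  IsGeodesicOn c s ∧ ∀ t₀ ∈ interior s, OppositeDirectionsAt c t₀

/-- `δ` is a minimal geodesic in the link of `x` on the set `s`. -/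
def LinkMinGeodesicOn (x : X) (δ : ℝ → LinkSpace x) (s : Set ℝ) : Prop :=
  ∀ a ∈ s, ∀ b ∈ s, linkDist x (δ a) (δ b) = ENNReal.ofReal |a - b|

/-- A simple closed geodesic of length `M` in the link of `x`. -/
def IsSimpleClosedLinkGeodesic (x : X) (δ : ℝ → LinkSpace x) (M : ℝ) : Prop :=
  0 < M ∧ (∀ t, δ (t + M) = δ t) ∧
  (∀ t : ℝ, ∃ ε : ℝ, 0 < ε ∧ LinkMinGeodesicOn x δ (Set.Icc (t - ε) (t + ε))) ∧
  Set.InjOn δ (Set.Ico 0 M)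

/-- The length of a loop `γ` (of period 1) in the link of `x`. -/
def loopLinkLength (x : X) (γ : ℝ → LinkSpace x) : ENNReal :=
  rhoLength (linkDist x) γ 0 1

/-! ### Loops, free homotopy and first homology -/

/-- Two loops of period `1` are freely homotopic. -/
def FreelyHomotopicLoops {A : Type*} [TopologicalSpace A] (γ₁ γ₂ : ℝ → A) : Prop :=
  ∃ H : ℝ × ℝ → A, Continuous H ∧ (∀ t, H (0, t) = γ₁ t) ∧
    (∀ t, H (1, t) = γ₂ t) ∧ ∀ s t, H (s, t + 1) = H (s, t)

/-- A loop (as a path) represents a nontrivial class in first homology, i.e. its class in the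
abelianized fundamental group (=`H₁` by Hurewicz) is nontrivial. -/
def LoopNontrivialInH1 {A : Type u} [TopologicalSpace A] {a : A} (p : Path a a) : Prop :=
  Abelianization.of
      (FundamentalGroup.fromPath (X := TopCat.of A)
        (Quotient.mk (Path.Homotopic.setoid a a) p)) ≠ 1

/-- `γ` is the loop `log_x ∘ σ` in the link of `x`: for each `t`, `γ t` is the initial
direction of a ray from `x` belonging to the class `σ t`. -/
def IsLogLoop (x : X) (σ : ℝ → IdealBoundary X) (γ : ℝ → LinkSpace x) : Prop :=
  ∀ t : ℝ, ∃ (f : ℝ → X) (hf : IsRay f) (hgf : IsGeodGermFrom x f),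
    rayClass hf = σ t ∧ γ t = germClass hgf

/-- The periodic loop `γ` (period `L`) in the link of `x` defines a nontrivial class in the
first homology of the link. -/
def LoopRepsNontrivialH1 (x : X) (γ : ℝ → LinkSpace x) (L : ℝ) : Prop :=
  ∃ p : Path (γ 0) (γ 0), (∀ s : unitInterval, p s = γ (L * (s : ℝ))) ∧ LoopNontrivialInH1 p

/-- The support set of the closed Tits geodesic `σ` (of period `L`): the points `x` such that
`log_x ∘ σ` represents a nontrivial class in `H₁(Link(X,x))`. -/
def suppSet (σ : ℝ → IdealBoundary X) (L : ℝ) : Set X :=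
  {x | ∃ γ : ℝ → LinkSpace x, IsLogLoop x σ γ ∧ (∀ t, γ (t + L) = γ t) ∧
    LoopRepsNontrivialH1 x γ L}

/-! ### Square complexes -/

/-- The Euclidean distance on `ℝ × ℝ`. -/
def edist2 (p q : ℝ × ℝ) : ℝ := Real.sqrt ((p.1 - q.1) ^ 2 + (p.2 - q.2) ^ 2)

/-- The unit square. -/
def UnitSquare : Set (ℝ × ℝ) := {p | p.1 ∈ Set.Icc (0 : ℝ) 1 ∧ p.2 ∈ Set.Icc (0 : ℝ) 1}

/-- A square complex structure on the metric space `X`: a locally finite piecewise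
Euclidean polygonal complex, all of whose 2-cells are unit Euclidean squares, whose
underlying space is `X` with its path metric. -/
structure SquareComplex (X : Type u) [MetricSpace X] where
  vertices : Set X
  edges : Set (ℝ → X)
  squares : Set (ℝ × ℝ → X)
  edge_geodesic : ∀ e ∈ edges, ∀ s ∈ Set.Icc (0 : ℝ) 1, ∀ t ∈ Set.Icc (0 : ℝ) 1,
    dist (e s) (e t) = |s - t|
  edge_ends : ∀ e ∈ edges, e 0 ∈ vertices ∧ e 1 ∈ vertices
  edge_rev : ∀ e ∈ edges, (fun t => e (1 - t)) ∈ edges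
  square_isometric : ∀ q ∈ squares, ∀ p ∈ UnitSquare, ∀ p' ∈ UnitSquare,
    dist (q p) (q p') = edist2 p p'
  square_sides : ∀ q ∈ squares, (fun t => q (t, 0)) ∈ edges ∧ (fun t => q (0, t)) ∈ edges ∧
    (fun t => q (t, 1)) ∈ edges ∧ (fun t => q (1, t)) ∈ edges
  square_symm_swap : ∀ q ∈ squares, (fun p : ℝ × ℝ => q (p.2, p.1)) ∈ squares
  square_symm_flip : ∀ q ∈ squares, (fun p : ℝ × ℝ => q (1 - p.1, p.2)) ∈ squares
  square_inter : ∀ q ∈ squares, ∀ q' ∈ squares,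
    (q '' UnitSquare ∩ q' '' UnitSquare = ∅) ∨
    (∃ v ∈ vertices, q '' UnitSquare ∩ q' '' UnitSquare = {v}) ∨
    (∃ e ∈ edges, q '' UnitSquare ∩ q' '' UnitSquare = e '' Set.Icc 0 1) ∨
    (q '' UnitSquare = q' '' UnitSquare)
  cover : ∀ x : X, x ∈ vertices ∨ (∃ e ∈ edges, ∃ t ∈ Set.Icc (0 : ℝ) 1, e t = x) ∨
    (∃ q ∈ squares, ∃ p ∈ UnitSquare, q p = x)
  locally_finite : ∀ x : X, ∃ ε : ℝ, 0 < ε ∧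
    {q ∈ squares | ∃ p ∈ UnitSquare, dist (q p) x ≤ ε}.Finite ∧
    {e ∈ edges | ∃ t ∈ Set.Icc (0 : ℝ) 1, dist (e t) x ≤ ε}.Finite

/-- The vertex link of the square complex at `v` contains a simple loop consisting of `n`
edges: a cyclic chain of `n` squares with a corner at `v`, consecutive ones glued along an
edge at `v`, with all the `n` edge-directions at `v` pairwise distinct. -/
def HasSimpleLinkLoop (S : SquareComplex X) (v : X) (n : ℕ) : Prop :=
  ∃ q : ZMod n → (ℝ × ℝ → X),
    (∀ i, q i ∈ S.squares) ∧ (∀ i, q i (0, 0) = v) ∧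
    (∀ i, ∀ t ∈ Set.Icc (0 : ℝ) 1, q i (0, t) = q (i + 1) (t, 0)) ∧
    (∀ i j, i ≠ j → ∃ t ∈ Set.Icc (0 : ℝ) 1, q i (t, 0) ≠ q j (t, 0)) ∧
    (∀ i j, i ≠ j → ∃ p ∈ UnitSquare, q i p ≠ q j p)

/-- A CAT(0) square complex: simply connected and nonpositively curved (all simple loops in
vertex links have at least 4 edges, i.e. length at least `2π`); such a complex, with its
path metric, is a complete CAT(0) space. -/
structure IsCAT0SquareComplex (S : SquareComplex X) : Prop where
  simply_connected : SimplyConnectedSpace X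
  complete : CompleteSpace X
  cat0 : IsCAT0 X
  link_condition : ∀ v ∈ S.vertices, ∀ n : ℕ, 0 < n → n < 4 → ¬ HasSimpleLinkLoop S v n

/-! ### Quarter planes, fake planes, flats, strips -/

def Quadrant : Set (ℝ × ℝ) := {p | 0 ≤ p.1 ∧ 0 ≤ p.2}

def OpenQuadrant : Set (ℝ × ℝ) := {p | 0 < p.1 ∧ 0 < p.2}

/-- A cellular embedding of the first quadrant (with its unit-square tiling) into the square
complex; its image is a quarter plane with cone point `f (0,0)`. -/
def IsQuarterPlaneMap (S : SquareComplex X) (f : ℝ × ℝ → X) : Prop :=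
  Set.InjOn f Quadrant ∧
  ∀ i j : ℕ, (fun p : ℝ × ℝ => f (i + p.1, j + p.2)) ∈ S.squares

/-- A fake plane: a subcomplex homeomorphic to the plane which is the union of five quarter
planes with a common cone point and pairwise disjoint interiors. -/
def IsFakePlane (S : SquareComplex X) (F : Set X) : Prop :=
  Nonempty ((ℝ × ℝ) ≃ₜ F) ∧
  ∃ (v : X) (f : Fin 5 → ℝ × ℝ → X),
    (∀ k, IsQuarterPlaneMap S (f k)) ∧ (∀ k, f k (0, 0) = v) ∧
    (F = ⋃ k, f k '' Quadrant) ∧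
    (∀ k l, k ≠ l → f k '' OpenQuadrant ∩ f l '' OpenQuadrant = ∅)

def StripDomain : Set (ℝ × ℝ) := {p | 0 ≤ p.1 ∧ p.2 ∈ Set.Icc (0 : ℝ) 1}

/-- A flat half-strip in the square complex: a cellular isometric embedding of
`[0,∞) × [0,1]` with its unit-square tiling. -/
def IsFlatHalfStrip (S : SquareComplex X) (f : ℝ × ℝ → X) : Prop :=
  (∀ p ∈ StripDomain, ∀ p' ∈ StripDomain, dist (f p) (f p') = edist2 p p') ∧
  ∀ i : ℕ, (fun p : ℝ × ℝ => f (i + p.1, p.2)) ∈ S.squares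

/-- A singular point of the Tits boundary of a square complex: the class of the rays of some
flat half-strip. -/
def IsSingularPoint (S : SquareComplex X) (ξ : IdealBoundary X) : Prop :=
  ∃ f : ℝ × ℝ → X, IsFlatHalfStrip S f ∧ RepresentsRay (fun t => f (t, 0)) ξ

/-- A flat: an isometrically embedded Euclidean plane. -/
def IsFlat (A : Set X) : Prop :=
  ∃ f : ℝ × ℝ → X, (∀ p p' : ℝ × ℝ, dist (f p) (f p') = edist2 p p') ∧ A = Set.range f

/-- The complete geodesic `c` bounds a flat half-plane. -/
def BoundsFlatHalfPlane (c : ℝ → X) : Prop :=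
  ∃ f : ℝ × ℝ → X,
    (∀ p p' : ℝ × ℝ, 0 ≤ p.2 → 0 ≤ p'.2 → dist (f p) (f p') = edist2 p p') ∧
    ∀ t : ℝ, f (t, 0) = c t

/-! ### Parallel sets, rank one, generic and special elements -/

/-- Two complete geodesics are parallel: they are at bounded Hausdorff distance. -/
def ParallelLines (c c' : ℝ → X) : Prop :=
  ∃ C : ℝ, (∀ t : ℝ, ∃ s : ℝ, dist (c t) (c' s) ≤ C) ∧
    ∀ s : ℝ, ∃ t : ℝ, dist (c t) (c' s) ≤ C

/-- The parallel set `P_g` of a hyperbolic isometry: the union of all complete geodesics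
parallel to its axes. -/
def ParallelSet (g : X ≃ᵢ X) : Set X :=
  {x | ∃ (c c' : ℝ → X) (l : ℝ), IsAxis g c l ∧ IsCompleteGeodesic c' ∧
    ParallelLines c c' ∧ x ∈ Set.range c'}

/-- A rank one isometry: a hyperbolic isometry none of whose axes bounds a flat half-plane. -/
def IsRankOne (g : X ≃ᵢ X) : Prop :=
  IsHyperbolic g ∧ ∀ c l, IsAxis g c l → ¬ BoundsFlatHalfPlane c

/-- A generic element: a hyperbolic isometry whose parallel set is a flat and whose axes are
parallel to no edge in the parallel set. -/
def IsGenericElement (S : SquareComplex X) (g : X ≃ᵢ X) : Prop :=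
  IsHyperbolic g ∧ IsFlat (ParallelSet g) ∧
  ∀ c l, IsAxis g c l → ∀ e ∈ S.edges, (∀ t ∈ Set.Icc (0 : ℝ) 1, e t ∈ ParallelSet g) →
    ∀ c' : ℝ → X, IsCompleteGeodesic c' → Set.range c' ⊆ ParallelSet g →
      (∀ t ∈ Set.Icc (0 : ℝ) 1, e t ∈ Set.range c') → ¬ ParallelLines c c'

/-- A special element: a hyperbolic isometry that is neither generic nor rank one. -/
def IsSpecialElement (S : SquareComplex X) (g : X ≃ᵢ X) : Prop :=
  IsHyperbolic g ∧ ¬ IsGenericElement S g ∧ ¬ IsRankOne g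

/-! ### Group actions -/

/-- An isometry of a square complex is cellular if it permutes the cells. -/
def CellularIso (S : SquareComplex X) (g : X ≃ᵢ X) : Prop :=
  (∀ v ∈ S.vertices, g v ∈ S.vertices) ∧
  (∀ e ∈ S.edges, (fun t => g (e t)) ∈ S.edges) ∧
  (∀ q ∈ S.squares, (fun p => g (q p)) ∈ S.squares)

variable {G : Type*} [Group G]

/-- A proper action: only finitely many group elements move a compact set into itself. -/
def ProperAction (φ : G →* (X ≃ᵢ X)) : Prop :=
  ∀ K : Set X, IsCompact K → {g : G | ((φ g) '' K ∩ K).Nonempty}.Finite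

/-- A cocompact action. -/
def CocompactAction (φ : G →* (X ≃ᵢ X)) : Prop :=
  ∃ K : Set X, IsCompact K ∧ ∀ x : X, ∃ g : G, ∃ y ∈ K, φ g y = x

/-- A proper and cocompact action by cellular isometries on a square complex. -/
def GeometricCellularAction (S : SquareComplex X) (φ : G →* (X ≃ᵢ X)) : Prop :=
  (∀ g : G, CellularIso S (φ g)) ∧ ProperAction φ ∧ CocompactAction φ

/-- The square complex admits a proper, cocompact action by cellular isometries. -/
def AdmitsGeometricCellularAction (S : SquareComplex X) : Prop :=
  ∃ Γ : Subgroup (X ≃ᵢ X), (∀ g ∈ Γ, CellularIso S g) ∧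
    ProperAction Γ.subtype ∧ CocompactAction Γ.subtype

/-! ### Group-theoretic notions -/

/-- A group is virtually free abelian if it has a free abelian subgroup of finite index. -/
def VirtuallyFreeAbelian (G : Type*) [Group G] : Prop :=
  ∃ K : Subgroup G, K.FiniteIndex ∧ ∃ n : ℕ, Nonempty (K ≃* Multiplicative (Fin n → ℤ))

/-- A group contains a free group of rank two. -/
def ContainsRankTwoFreeGroup (G : Type*) [Group G] : Prop :=
  ∃ K : Subgroup G, Nonempty (K ≃* FreeGroup (Fin 2))

/-! ### General polygonal (2-dimensional piecewise Euclidean) complexes -/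

/-- A compact convex polygon in the plane. -/
def IsConvexPolygon (P : Set (ℝ × ℝ)) : Prop :=
  Convex ℝ P ∧ IsCompact P ∧ (interior P).Nonempty ∧ (P.extremePoints ℝ).Finite

/-- A polygonal complex structure on the metric space `X`: a locally finite piecewise
Euclidean 2-complex whose underlying space is `X` with its path metric. Edges are recorded
as pairs (map, length) and 2-cells as pairs (polygon, map). -/
structure PolygonalComplex (X : Type u) [MetricSpace X] where
  vertices : Set X
  edges : Set ((ℝ → X) × ℝ)
  faces : Set ((Set (ℝ × ℝ)) × ((ℝ × ℝ) → X))
  edge_len_pos : ∀ e ∈ edges, 0 < e.2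
  edge_geodesic : ∀ e ∈ edges, ∀ s ∈ Set.Icc 0 e.2, ∀ t ∈ Set.Icc 0 e.2,
    dist (e.1 s) (e.1 t) = |s - t|
  edge_ends : ∀ e ∈ edges, e.1 0 ∈ vertices ∧ e.1 e.2 ∈ vertices
  face_polygon : ∀ F ∈ faces, IsConvexPolygon F.1
  face_isometric : ∀ F ∈ faces, ∀ p ∈ F.1, ∀ q ∈ F.1, dist (F.2 p) (F.2 q) = edist2 p q
  face_corners : ∀ F ∈ faces, ∀ p ∈ F.1.extremePoints ℝ, F.2 p ∈ vertices
  face_boundary : ∀ F ∈ faces, ∀ p ∈ F.1 \ interior F.1,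
    F.2 p ∈ vertices ∨ ∃ e ∈ edges, ∃ t ∈ Set.Icc 0 e.2, e.1 t = F.2 p
  cover : ∀ x : X, x ∈ vertices ∨ (∃ e ∈ edges, ∃ t ∈ Set.Icc 0 e.2, e.1 t = x) ∨
    (∃ F ∈ faces, ∃ p ∈ F.1, F.2 p = x)
  locally_finite : ∀ x : X, ∃ ε : ℝ, 0 < ε ∧
    {F ∈ faces | ∃ p ∈ F.1, dist (F.2 p) x ≤ ε}.Finite ∧
    {e ∈ edges | ∃ t ∈ Set.Icc 0 e.2, dist (e.1 t) x ≤ ε}.Finite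

/-- A CAT(0) 2-complex: a simply connected nonpositively curved (every simple loop in every
link has length at least `2π`) polygonal complex; such a complex is a complete CAT(0)
space. -/
structure IsCAT0TwoComplex (S : PolygonalComplex X) : Prop where
  simply_connected : SimplyConnectedSpace X
  complete : CompleteSpace X
  cat0 : IsCAT0 X
  link_condition : ∀ x : X, ∀ γ : ℝ → LinkSpace x,
    Continuous γ → (∀ t, γ (t + 1) = γ t) → Set.InjOn γ (Set.Ico (0 : ℝ) 1) →
    ENNReal.ofReal (2 * Real.pi) ≤ loopLinkLength x γ

/-- An isometry of a polygonal complex is cellular if it permutes the cells. -/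
def PCellularIso (S : PolygonalComplex X) (g : X ≃ᵢ X) : Prop :=
  (∀ v ∈ S.vertices, g v ∈ S.vertices) ∧
  (∀ e ∈ S.edges, ((fun t => g (e.1 t)), e.2) ∈ S.edges) ∧
  (∀ F ∈ S.faces, (F.1, fun p => g (F.2 p)) ∈ S.faces)

/-- The polygonal complex admits a proper, cocompact action by cellular isometries. -/
def AdmitsGeometricCellularActionP (S : PolygonalComplex X) : Prop :=
  ∃ Γ : Subgroup (X ≃ᵢ X), (∀ g ∈ Γ, PCellularIso S g) ∧
    ProperAction Γ.subtype ∧ CocompactAction Γ.subtype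

/-! ### Miscellaneous -/

/-- `p` is a nearest point of `A` to `x`. -/
def IsNearestPoint (A : Set X) (x p : X) : Prop :=
  p ∈ A ∧ ∀ q ∈ A, dist x p ≤ dist x q

/-- An `ℝ`-tree: a geodesic metric space satisfying the 0-hyperbolic four-point
condition. -/
def IsRTree (Y : Type*) [MetricSpace Y] : Prop :=
  (∀ x y : Y, ∃ f : ℝ → Y, IsGeodesicSegment f x y) ∧
  ∀ x y z w : Y, dist x y + dist z w ≤ max (dist x z + dist y w) (dist x w + dist y z)

end CAT0SC

open CAT0SC

/-!
Since angles at `x` are bounded by Tits angles, `log_x` is 1-Lipschitz, so `log_x(c)` is a loop of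
length at most `L < 4π` in the link; it is not null-homotopic because it is nontrivial in `H₁`.

In a length space whose simple loops have length at least `2π`, two arcs with common endpoints and
total length less than `2π` have the same image. Hence points at distance less than `π` are joined
by a unique geodesic, which depends continuously on its endpoints and lies in the image of every
short path between them. Consequently uniformly close loops are freely homotopic, and Arzelà–Ascoli,
applied inside the compact image of the given loop, yields a shortest loop in its free homotopy
class. Shortcutting shows that this loop minimises length on intervals shorter than `π`. If it were
not simple, a double point would cut it into two lobes, one of length less than `2π`. Both halves of
that lobe would be geodesics of length less than `π` from its midpoint to the double point, hence
equal, contradicting local minimality at the midpoint.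
-/

namespace CAT0SC

open Function Metric Filter Topology
open scoped NNReal ENNReal

/-! ### Free homotopy -/

section FreeHomotopy

variable {A : Type*} [TopologicalSpace A] {γ₁ γ₂ γ₃ : ℝ → A}

theorem FreelyHomotopicLoops.refl (hγ : Continuous γ₁) (hper : Periodic γ₁ 1) :
    FreelyHomotopicLoops γ₁ γ₁ :=
  ⟨fun p => γ₁ p.2, by fun_prop, fun _ => rfl, fun _ => rfl, fun _ t => hper t⟩

theorem FreelyHomotopicLoops.trans (h₁ : FreelyHomotopicLoops γ₁ γ₂)
    (h₂ : FreelyHomotopicLoops γ₂ γ₃) : FreelyHomotopicLoops γ₁ γ₃ := by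
  obtain ⟨H, hH, hH₀, hH₁, hHper⟩ := h₁
  obtain ⟨G, hG, hG₀, hG₁, hGper⟩ := h₂
  refine ⟨fun p => if p.1 ≤ 1 / 2 then H (2 * p.1, p.2) else G (2 * p.1 - 1, p.2),
    Continuous.if_le (by fun_prop) (by fun_prop) (by fun_prop) (by fun_prop) ?_,
    fun t => by simp [hH₀], fun t => by norm_num [hG₁], fun s t => by simp only [hHper, hGper]⟩
  rintro ⟨s, t⟩ rfl
  norm_num [hH₁, hG₀]

theorem freelyHomotopicLoops_comp_add_const (hγ : Continuous γ₁) (hper : Periodic γ₁ 1) (a : ℝ) :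
    FreelyHomotopicLoops γ₁ (fun t => γ₁ (t + a)) :=
  ⟨fun p => γ₁ (p.2 + p.1 * a), by fun_prop, fun t => by simp, fun t => by simp,
    fun s t => by
      dsimp only
      rw [add_right_comm, hper]⟩

theorem FreelyHomotopicLoops.map {B : Type*} [TopologicalSpace B] {f : A → B} (hf : Continuous f)
    (h : FreelyHomotopicLoops γ₁ γ₂) : FreelyHomotopicLoops (f ∘ γ₁) (f ∘ γ₂) := by
  obtain ⟨H, hH, hH₀, hH₁, hHper⟩ := h
  exact ⟨f ∘ H, hf.comp hH, fun t => congrArg f (hH₀ t), fun t => congrArg f (hH₁ t),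
    fun s t => congrArg f (hHper s t)⟩

theorem continuous_of_inseparable {Y : Type*} [TopologicalSpace Y] {f g : Y → A}
    (hf : Continuous f) (hfg : ∀ y, Inseparable (f y) (g y)) : Continuous g := by
  rw [SeparationQuotient.isInducing_mk.continuous_iff] at hf ⊢
  exact hf.congr fun y => SeparationQuotient.mk_eq_mk.2 (hfg y)

theorem FreelyHomotopicLoops.congr_left_of_inseparable (h : FreelyHomotopicLoops γ₂ γ₃)
    (hins : ∀ t, Inseparable (γ₂ t) (γ₁ t)) (hper : Periodic γ₁ 1) :
    FreelyHomotopicLoops γ₁ γ₃ := by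
  obtain ⟨H, hH, hH₀, hH₁, hHper⟩ := h
  refine ⟨fun p => if p.1 = 0 then γ₁ p.2 else H p, continuous_of_inseparable hH fun p => ?_,
    fun t => if_pos rfl, fun t => by simp [hH₁], fun s t => by simp only [hper t, hHper]⟩
  split_ifs with hp
  · rw [← Prod.mk.eta (p := p), hp, hH₀]
    exact hins p.2
  · exact Inseparable.refl _

theorem path_cast_trans_cast {a b b' c : A} (p : Path a b) (q : Path b c) (h : b' = b) :
    (p.cast rfl h).trans (q.cast h rfl) = p.trans q := by
  subst h
  rfl

theorem homotopic_refl_of_trans_homotopic {a b : A} {p : Path a a} {e : Path a b}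
    (h : (p.trans e).Homotopic (e.trans (Path.refl b))) : p.Homotopic (Path.refl a) := by
  simp only [← Path.Homotopic.Quotient.eq, Path.Homotopic.Quotient.mk_trans,
    Path.Homotopic.Quotient.mk_refl, Path.Homotopic.Quotient.trans_refl] at h ⊢
  rw [← Path.Homotopic.Quotient.trans_refl (.mk p), ← Path.Homotopic.Quotient.trans_symm (.mk e),
    ← Path.Homotopic.Quotient.trans_assoc, h]

theorem homotopic_refl_of_freelyHomotopicLoops_const {a b : A}
    (h : FreelyHomotopicLoops γ₁ (fun _ => b)) (p : Path a a) (hp : ∀ s, p s = γ₁ s) :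
    p.Homotopic (Path.refl a) := by
  obtain rfl : a = γ₁ 0 := by simpa using hp 0
  obtain ⟨H, hH, hH₀, hH₁, hHper⟩ := h
  have hγ : Continuous γ₁ := (funext hH₀ : (fun t => H (0, t)) = γ₁) ▸ by fun_prop
  let F : ContinuousMap.Homotopy (⟨γ₁, hγ⟩ : C(ℝ, A)) (ContinuousMap.const ℝ b) :=
    { toFun := fun q => H (q.1, q.2)
      map_zero_left := hH₀
      map_one_left := hH₁ }
  let e₀ : Path (γ₁ 0) b := F.evalAt 0
  let e₁ : Path (γ₁ 1) b := F.evalAt 1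
  let q : Path (0 : ℝ) 1 := ⟨⟨(↑), by fun_prop⟩, rfl, rfl⟩
  have hγ₁ : γ₁ 0 = γ₁ 1 := by rw [← hH₀, ← hH₀, ← hHper 0 0, zero_add]
  have hpq : p = (q.map hγ).cast rfl hγ₁ := by ext s; exact hp s
  have he : e₀ = e₁.cast hγ₁ rfl := by
    ext s
    have := hHper s 0
    rw [zero_add] at this
    exact this.symm
  refine homotopic_refl_of_trans_homotopic (e := e₀) ?_
  have hconj : ((q.map hγ).trans e₁).Homotopic (e₀.trans (Path.refl b)) :=
    Path.Homotopic.map_trans_evalAt F q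
  rwa [← path_cast_trans_cast (q.map hγ) e₁ hγ₁, ← hpq, ← he] at hconj

theorem not_loopNontrivialInH1_of_homotopic_refl {a : A} {p : Path a a}
    (h : p.Homotopic (Path.refl a)) : ¬ LoopNontrivialInH1 p := by
  have hp : Quotient.mk (Path.Homotopic.setoid a a) p = Quotient.mk _ (Path.refl a) :=
    Quotient.sound h
  rw [LoopNontrivialInH1, hp, not_not]
  exact map_one _

end FreeHomotopy

/-! ### Lipschitz paths and arcs -/

section PiecewisePaths

variable {α : Type*} {c₁ c₂ : ℝ → α} {ℓ ℓ₁ ℓ₂ t : ℝ}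

/-- The concatenation of `c₁`, followed up to time `ℓ₁`, with `c₂`. -/
def concat (c₁ : ℝ → α) (ℓ₁ : ℝ) (c₂ : ℝ → α) : ℝ → α :=
  fun t => if t ≤ ℓ₁ then c₁ t else c₂ (t - ℓ₁)

theorem concat_of_le (h : t ≤ ℓ₁) : concat c₁ ℓ₁ c₂ t = c₁ t := if_pos h

theorem concat_of_lt (h : ℓ₁ < t) : concat c₁ ℓ₁ c₂ t = c₂ (t - ℓ₁) := if_neg h.not_ge

theorem concat_mem_union (ht : t ∈ Icc 0 (ℓ₁ + ℓ₂)) :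
    concat c₁ ℓ₁ c₂ t ∈ c₁ '' Icc 0 ℓ₁ ∪ c₂ '' Icc 0 ℓ₂ := by
  rcases le_or_gt t ℓ₁ with htl | htl
  · rw [concat_of_le htl]
    exact .inl ⟨t, ⟨ht.1, htl⟩, rfl⟩
  · rw [concat_of_lt htl]
    exact .inr ⟨t - ℓ₁, ⟨by linarith, by linarith [ht.2]⟩, rfl⟩

/-- The `ℓ`-periodic extension of the restriction of `p` to `[0, ℓ)`. -/
def periodize (p : ℝ → α) (hℓ : 0 < ℓ) : ℝ → α := fun t => p (toIcoMod hℓ 0 t)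

theorem periodize_periodic (p : ℝ → α) (hℓ : 0 < ℓ) : Periodic (periodize p hℓ) ℓ := fun t => by
  simp only [periodize, toIcoMod_add_right]

theorem periodize_of_mem (p : ℝ → α) (hℓ : 0 < ℓ) (ht : t ∈ Ico 0 ℓ) : periodize p hℓ t = p t := by
  rw [periodize, (toIcoMod_eq_self hℓ).2 (by simpa using ht)]

theorem periodize_mem_image (p : ℝ → α) (hℓ : 0 < ℓ) (t : ℝ) :
    periodize p hℓ t ∈ p '' Icc 0 ℓ :=
  ⟨_, by simpa using Ico_subset_Icc_self (toIcoMod_mem_Ico hℓ 0 t), rfl⟩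

theorem periodize_injOn {p : ℝ → α} (hp : InjOn p (Ico 0 ℓ)) (hℓ : 0 < ℓ) :
    InjOn (periodize p hℓ) (Ico 0 ℓ) :=
  hp.congr fun _ ht => (periodize_of_mem p hℓ ht).symm

end PiecewisePaths

section LipschitzPaths

variable {Λ : Type*} [MetricSpace Λ] {c c₁ c₂ : ℝ → Λ} {ℓ ℓ₁ ℓ₂ a b s t : ℝ} {u v w : Λ}

theorem dist_le_abs_sub_of_lipschitzWith_one (hc : LipschitzWith 1 c) (s t : ℝ) :
    dist (c s) (c t) ≤ |s - t| := by
  simpa [Real.dist_eq] using hc.dist_le_mul s t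

theorem dist_le_sub_of_lipschitzWith_one (hc : LipschitzWith 1 c) (hst : s ≤ t) :
    dist (c s) (c t) ≤ t - s := by
  simpa only [abs_sub_comm s t, abs_of_nonneg (sub_nonneg.2 hst)] using
    dist_le_abs_sub_of_lipschitzWith_one hc s t

theorem lipschitzWith_one_of_dist_le_sub (hc : ∀ s t, s ≤ t → dist (c s) (c t) ≤ t - s) :
    LipschitzWith 1 c := by
  refine LipschitzWith.mk_one fun s t => ?_
  rw [Real.dist_eq]
  rcases le_total s t with hst | hst
  · rw [abs_sub_comm, abs_of_nonneg (sub_nonneg.2 hst)]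
    exact hc s t hst
  · rw [abs_of_nonneg (sub_nonneg.2 hst), dist_comm]
    exact hc t s hst

theorem lipschitzWith_one_ite_le (h₁ : LipschitzWith 1 c₁) (h₂ : LipschitzWith 1 c₂)
    (ha : c₁ a = c₂ a) : LipschitzWith 1 fun t => if t ≤ a then c₁ t else c₂ t := by
  refine lipschitzWith_one_of_dist_le_sub fun s t hst => ?_
  split_ifs with hs ht ht
  · exact dist_le_sub_of_lipschitzWith_one h₁ hst
  · calc dist (c₁ s) (c₂ t) ≤ dist (c₁ s) (c₁ a) + dist (c₂ a) (c₂ t) := by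
          rw [← ha]; exact dist_triangle _ _ _
      _ ≤ (a - s) + (t - a) := add_le_add (dist_le_sub_of_lipschitzWith_one h₁ hs)
          (dist_le_sub_of_lipschitzWith_one h₂ (not_le.1 ht).le)
      _ = t - s := by ring
  · exact absurd (hst.trans ht) hs
  · exact dist_le_sub_of_lipschitzWith_one h₂ hst

/-- `c` runs from `u` to `v` on `[0, ℓ]` with speed at most one. It is required to be `1`-Lipschitz
on all of `ℝ`, so that paths can be reparametrised freely. -/
structure IsLipschitzPath (c : ℝ → Λ) (ℓ : ℝ) (u v : Λ) : Prop where
  lipschitz : LipschitzWith 1 c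
  nonneg : 0 ≤ ℓ
  source : c 0 = u
  target : c ℓ = v

/-- An injective path of speed at most one; see `IsLipschitzPath`. -/
structure IsArc (c : ℝ → Λ) (ℓ : ℝ) (u v : Λ) : Prop extends IsLipschitzPath c ℓ u v where
  injOn : InjOn c (Icc 0 ℓ)

namespace IsLipschitzPath

theorem dist_le (h : IsLipschitzPath c ℓ u v) : dist u v ≤ ℓ := by
  simpa [h.source, h.target] using dist_le_sub_of_lipschitzWith_one h.lipschitz h.nonneg

theorem trans (h₁ : IsLipschitzPath c₁ ℓ₁ u v) (h₂ : IsLipschitzPath c₂ ℓ₂ v w) :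
    IsLipschitzPath (concat c₁ ℓ₁ c₂) (ℓ₁ + ℓ₂) u w where
  lipschitz := by
    refine lipschitzWith_one_ite_le h₁.lipschitz
      (lipschitzWith_one_of_dist_le_sub fun s t hst => ?_) (by simp [h₁.target, h₂.source])
    simpa using dist_le_sub_of_lipschitzWith_one h₂.lipschitz (sub_le_sub_right hst ℓ₁)
  nonneg := add_nonneg h₁.nonneg h₂.nonneg
  source := (concat_of_le h₁.nonneg).trans h₁.source
  target := by
    rcases h₂.nonneg.eq_or_lt with hℓ₂ | hℓ₂
    · rw [concat_of_le (by linarith), ← hℓ₂, add_zero, h₁.target, ← h₂.source, ← h₂.target, hℓ₂]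
    · rw [concat_of_lt (by linarith), add_sub_cancel_left, h₂.target]

theorem symm (h : IsLipschitzPath c ℓ u v) : IsLipschitzPath (fun t => c (ℓ - t)) ℓ v u where
  lipschitz := lipschitzWith_one_of_dist_le_sub fun s t hst => by
    rw [dist_comm]
    simpa using dist_le_sub_of_lipschitzWith_one h.lipschitz (sub_le_sub_left hst ℓ)
  nonneg := h.nonneg
  source := by simp [h.target]
  target := by simp [h.source]

theorem of_lipschitzWith_one (hc : LipschitzWith 1 c) (hab : a ≤ b) :
    IsLipschitzPath (fun t => c (t + a)) (b - a) (c a) (c b) where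
  lipschitz := lipschitzWith_one_of_dist_le_sub fun s t hst => by
    simpa using dist_le_sub_of_lipschitzWith_one hc (add_le_add_left hst a)
  nonneg := sub_nonneg.2 hab
  source := by simp
  target := by simp

theorem isCompact_image (h : IsLipschitzPath c ℓ u v) : IsCompact (c '' Icc 0 ℓ) :=
  isCompact_Icc.image h.lipschitz.continuous

end IsLipschitzPath

namespace IsArc

theorem restrict (h : IsArc c ℓ u v) (ha : 0 ≤ a) (hab : a ≤ b) (hb : b ≤ ℓ) :
    IsArc (fun t => c (t + a)) (b - a) (c a) (c b) where
  toIsLipschitzPath := .of_lipschitzWith_one h.lipschitz hab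
  injOn s hs t ht hst := add_right_cancel
    (h.injOn ⟨add_nonneg hs.1 ha, by linarith [hs.2]⟩ ⟨add_nonneg ht.1 ha, by linarith [ht.2]⟩ hst)

theorem symm (h : IsArc c ℓ u v) : IsArc (fun t => c (ℓ - t)) ℓ v u where
  toIsLipschitzPath := h.toIsLipschitzPath.symm
  injOn s hs t ht hst := sub_right_injective
    (h.injOn ⟨by linarith [hs.2], by linarith [hs.1]⟩ ⟨by linarith [ht.2], by linarith [ht.1]⟩ hst)

theorem exists_isArc_between (h : IsArc c ℓ u v) (hs : s ∈ Icc 0 ℓ) (ht : t ∈ Icc 0 ℓ) :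
    ∃ c' m, IsArc c' m (c s) (c t) ∧ m ≤ ℓ ∧ c' '' Icc 0 m ⊆ c '' Icc 0 ℓ := by
  rcases le_total s t with hst | hst
  · refine ⟨_, _, h.restrict hs.1 hst ht.2, by linarith [hs.1, ht.2], image_subset_iff.2 ?_⟩
    exact fun x hx => ⟨_, ⟨add_nonneg hx.1 hs.1, by linarith [hx.2, ht.2]⟩, rfl⟩
  · refine ⟨_, _, (h.restrict ht.1 hst hs.2).symm, by linarith [ht.1, hs.2], image_subset_iff.2 ?_⟩
    exact fun x hx => ⟨_, ⟨by linarith [hx.2, ht.1], by linarith [hx.1, hs.2]⟩, rfl⟩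

end IsArc

theorem IsLipschitzPath.lipschitzWith_periodize (h : IsLipschitzPath c ℓ u u) (hℓ : 0 < ℓ) :
    LipschitzWith 1 (periodize c hℓ) := by
  refine lipschitzWith_one_of_dist_le_sub fun s t hst => ?_
  have hs := toIcoMod_mem_Ico hℓ 0 s
  have ht := toIcoMod_mem_Ico hℓ 0 t
  have hs_add := toIcoMod_add_toIcoDiv_zsmul hℓ 0 s
  have ht_add := toIcoMod_add_toIcoDiv_zsmul hℓ 0 t
  simp only [periodize, zero_add, zsmul_eq_mul] at hs ht hs_add ht_add ⊢
  generalize toIcoMod hℓ 0 s = s', toIcoDiv hℓ 0 s = m at *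
  generalize toIcoMod hℓ 0 t = t', toIcoDiv hℓ 0 t = n at *
  rcases lt_trichotomy m n with hmn | rfl | hmn
  · have hmn' : (m + 1 : ℝ) * ℓ ≤ n * ℓ := by gcongr; exact_mod_cast hmn
    have hs' := dist_le_sub_of_lipschitzWith_one h.lipschitz hs.2.le
    have ht' := dist_le_sub_of_lipschitzWith_one h.lipschitz ht.1
    have := dist_triangle (c s') u (c t')
    rw [h.target] at hs'
    rw [h.source] at ht'
    linarith
  · exact (dist_le_sub_of_lipschitzWith_one h.lipschitz (by linarith)).trans_eq (by linarith)
  · have hmn' : (n + 1 : ℝ) * ℓ ≤ m * ℓ := by gcongr; exact_mod_cast hmn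
    linarith [hs.1, ht.2]

end LipschitzPaths

/-! ### Minimising the Lipschitz constant -/

section Minimisation

variable {Λ : Type*} [MetricSpace Λ] {c : ℝ → Λ} {ℓ : ℝ} {u v : Λ} {S : Set Λ}

theorem lipschitzWith_sInf {F : ℝ → Λ} {T : Set ℝ≥0} (hT : T.Nonempty)
    (hF : ∀ C ∈ T, LipschitzWith C F) : LipschitzWith (sInf T) F := by
  refine LipschitzWith.of_dist_le_mul fun s t => ?_
  rw [← coe_nndist, ← coe_nndist, ← NNReal.coe_mul, NNReal.coe_le_coe]
  rcases eq_or_ne (nndist s t) 0 with hst | hst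
  · simp [nndist_eq_zero.1 hst]
  · rw [← div_le_iff₀ (pos_iff_ne_zero.2 hst)]
    exact le_csInf hT fun C hC => (div_le_iff₀ (pos_iff_ne_zero.2 hst)).2 ((hF C hC).nndist_le s t)

theorem exists_lipschitzWith_minimal (hS : IsCompact S) {P : Set (ℝ → Λ)}
    (hP : ∀ C : ℝ≥0, IsClosed {F | F ∈ P ∧ LipschitzWith C F}) {F₀ : ℝ → Λ} {K : ℝ≥0}
    (hF₀ : F₀ ∈ P) (hK : LipschitzWith K F₀) (hF₀S : ∀ t, F₀ t ∈ S) :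
    ∃ F ∈ P, ∃ C ≤ K, LipschitzWith C F ∧ (∀ t, F t ∈ S) ∧
      ∀ G ∈ P, ∀ C', LipschitzWith C' G → (∀ t, G t ∈ S) → C ≤ C' := by
  let A : ℝ≥0 → Set (ℝ → Λ) := fun C => {F | F ∈ P ∧ LipschitzWith C F} ∩ univ.pi fun _ => S
  let T : Set ℝ≥0 := {C | (A C).Nonempty}
  have hA : ∀ C, IsCompact (A C) := fun C =>
    (isCompact_univ_pi fun _ => hS).inter_left (hP C)
  have hA_mono : Monotone A := fun _ _ hCC' _ hF => ⟨⟨hF.1.1, hF.1.2.weaken hCC'⟩, hF.2⟩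
  have hKT : K ∈ T := ⟨F₀, ⟨hF₀, hK⟩, fun t _ => hF₀S t⟩
  have : Nonempty T := ⟨⟨K, hKT⟩⟩
  have hdir : Directed (· ⊇ ·) fun C : T => A C := fun C C' => by
    rcases le_total C C' with h | h
    · exact ⟨C, subset_rfl, hA_mono h⟩
    · exact ⟨C', hA_mono h, subset_rfl⟩
  obtain ⟨F, hF⟩ := IsCompact.nonempty_iInter_of_directed_nonempty_isCompact_isClosed _ hdir
    (fun C => C.2) (fun C => hA C) (fun C => (hA C).isClosed)
  have hF : ∀ C ∈ T, F ∈ A C := fun C hC => mem_iInter.1 hF ⟨C, hC⟩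
  exact ⟨F, (hF K hKT).1.1, sInf T, csInf_le' hKT,
    lipschitzWith_sInf ⟨K, hKT⟩ fun C hC => (hF C hC).1.2, fun t => (hF K hKT).2 t trivial,
    fun G hG C' hGC' hGS => csInf_le' ⟨G, ⟨hG, hGC'⟩, fun t _ => hGS t⟩⟩

theorem IsLipschitzPath.exists_unit_reparametrization (h : IsLipschitzPath c ℓ u v) :
    ∃ F : ℝ → Λ, (F 0 = u ∧ F 1 = v) ∧ LipschitzWith ⟨ℓ, h.nonneg⟩ F ∧ ∀ t, F t ∈ c '' Icc 0 ℓ := by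
  have hproj : ∀ t, (projIcc (0 : ℝ) 1 zero_le_one t : ℝ) ∈ Icc (0 : ℝ) 1 := fun t => Subtype.mem _
  refine ⟨fun t => c (ℓ * projIcc 0 1 zero_le_one t), ⟨?_, ?_⟩, ?_, fun t => ⟨_, ?_, rfl⟩⟩
  · simp [h.source]
  · simp [h.target]
  · refine LipschitzWith.of_dist_le_mul fun s t => ?_
    calc _ ≤ |ℓ * projIcc 0 1 zero_le_one s - ℓ * projIcc 0 1 zero_le_one t| :=
          dist_le_abs_sub_of_lipschitzWith_one h.lipschitz _ _
      _ = ℓ * dist (projIcc (0 : ℝ) 1 zero_le_one s) (projIcc 0 1 zero_le_one t) := by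
          rw [← mul_sub, abs_mul, abs_of_nonneg h.nonneg, Subtype.dist_eq, Real.dist_eq]
      _ ≤ ℓ * dist s t := mul_le_mul_of_nonneg_left
          (by simpa using (LipschitzWith.projIcc zero_le_one).dist_le_mul s t) h.nonneg
  · exact ⟨mul_nonneg h.nonneg (hproj t).1, mul_le_of_le_one_right h.nonneg (hproj t).2⟩

theorem IsLipschitzPath.of_lipschitzWith {F : ℝ → Λ} {C : ℝ≥0} (hF : LipschitzWith C F) :
    IsLipschitzPath (fun t => F (t / C)) C (F 0) (F 1) where
  lipschitz := LipschitzWith.mk_one fun s t => by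
    rcases eq_or_ne C 0 with rfl | hC
    · simp
    · have hC : (C : ℝ) ≠ 0 := NNReal.coe_ne_zero.2 hC
      refine (hF.dist_le_mul _ _).trans_eq ?_
      rw [Real.dist_eq, Real.dist_eq, ← sub_div, abs_div, NNReal.abs_eq, mul_div_cancel₀ _ hC]
  nonneg := C.2
  source := by simp
  target := by
    rcases eq_or_ne C 0 with rfl | hC
    · have := hF.dist_le_mul 0 1
      simpa [eq_comm] using this
    · simp [hC]

/-- `c` is a shortest path from `u` to `v` among those staying in `S`. -/
structure IsShortestPathIn (S : Set Λ) (c : ℝ → Λ) (ℓ : ℝ) (u v : Λ) : Prop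
    extends IsLipschitzPath c ℓ u v where
  mapsTo : MapsTo c (Icc 0 ℓ) S
  le_of_mapsTo : ∀ ⦃c' ℓ'⦄, IsLipschitzPath c' ℓ' u v → MapsTo c' (Icc 0 ℓ') S → ℓ ≤ ℓ'

theorem IsLipschitzPath.exists_isShortestPathIn (h : IsLipschitzPath c ℓ u v) :
    ∃ c' ℓ', ℓ' ≤ ℓ ∧ IsShortestPathIn (c '' Icc 0 ℓ) c' ℓ' u v := by
  have hclosed : ∀ C : ℝ≥0, IsClosed {F : ℝ → Λ | (F 0 = u ∧ F 1 = v) ∧ LipschitzWith C F} :=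
    fun C => ((isClosed_eq (continuous_apply 0) continuous_const).inter
      (isClosed_eq (continuous_apply 1) continuous_const)).inter
      (isClosed_setOfPred_lipschitzWith C)
  obtain ⟨F₀, hF₀, hF₀K, hF₀S⟩ := h.exists_unit_reparametrization
  obtain ⟨F, ⟨hF0, hF1⟩, C, hCK, hFC, hFS, hmin⟩ :=
    exists_lipschitzWith_minimal (P := {F | F 0 = u ∧ F 1 = v}) h.isCompact_image hclosed
      hF₀ hF₀K hF₀S
  have hpath := IsLipschitzPath.of_lipschitzWith hFC
  rw [hF0, hF1] at hpath
  refine ⟨_, C, hCK, hpath, fun t _ => hFS _, fun c' ℓ' hc' hc'S => ?_⟩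
  obtain ⟨G, hG, hGC', hGS⟩ := hc'.exists_unit_reparametrization
  exact hmin G hG _ hGC' fun t => hc'S.image_subset (hGS t)

theorem IsShortestPathIn.isArc (h : IsShortestPathIn S c ℓ u v) : IsArc c ℓ u v where
  toIsLipschitzPath := h.toIsLipschitzPath
  injOn := by
    -- A repeated value `c a = c b` would allow the piece between `a` and `b` to be cut out.
    have key : ∀ ⦃a⦄, a ∈ Icc 0 ℓ → ∀ ⦃b⦄, b ∈ Icc 0 ℓ → c a = c b → b ≤ a := by
      intro a ha b hb hab
      have hinit : IsLipschitzPath c a u (c b) := ⟨h.lipschitz, ha.1, h.source, hab⟩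
      have hcut := hinit.trans (h.target ▸ IsLipschitzPath.of_lipschitzWith_one h.lipschitz hb.2)
      have := h.le_of_mapsTo hcut fun t ht => by
        rcases concat_mem_union ht with ⟨s, hs, hs_eq⟩ | ⟨s, hs, hs_eq⟩ <;> rw [← hs_eq]
        · exact h.mapsTo ⟨hs.1, hs.2.trans ha.2⟩
        · exact h.mapsTo ⟨add_nonneg hs.1 hb.1, by linarith [hs.2]⟩
      linarith
    exact fun a ha b hb hab => le_antisymm (key hb ha hab.symm) (key ha hb hab)

end Minimisation

/-! ### Short geodesics in a length space with large systole -/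

theorem exists_disjoint_Ioo_of_notMem {F : Set ℝ} (hF : IsClosed F) {a₀ b₀ t₀ : ℝ} (ha₀ : a₀ ∈ F)
    (hb₀ : b₀ ∈ F) (ht₀ : t₀ ∈ Icc a₀ b₀) (ht₀F : t₀ ∉ F) :
    ∃ a ∈ F, ∃ b ∈ F, a₀ ≤ a ∧ a < b ∧ b ≤ b₀ ∧ ∀ t ∈ Ioo a b, t ∉ F := by
  obtain ⟨a, ⟨haF, haI⟩, ha⟩ := (isCompact_Icc.inter_left hF).exists_isGreatest
    ⟨a₀, ha₀, left_mem_Icc.2 ht₀.1⟩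
  obtain ⟨b, ⟨hbF, hbI⟩, hb⟩ := (isCompact_Icc.inter_left hF).exists_isLeast
    ⟨b₀, hb₀, right_mem_Icc.2 ht₀.2⟩
  have hat₀ : a < t₀ := lt_of_le_of_ne haI.2 fun h => ht₀F (h ▸ haF)
  have htb₀ : t₀ < b := lt_of_le_of_ne hbI.1 fun h => ht₀F (h ▸ hbF)
  refine ⟨a, haF, b, hbF, haI.1, hat₀.trans htb₀, hbI.2, fun t ht htF => ?_⟩
  rcases le_total t t₀ with h | h
  · exact ht.1.not_ge (ha ⟨htF, haI.1.trans ht.1.le, h⟩)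
  · exact ht.2.not_ge (hb ⟨htF, h, ht.2.le.trans hbI.2⟩)

section Systole

variable {Λ : Type*} [MetricSpace Λ] {c c₁ c₂ p : ℝ → Λ} {r m ℓ ℓ₁ ℓ₂ s t : ℝ} {u v : Λ}

/-- Length spaces: the distance is the infimum of the lengths of the paths joining two points. -/
def IsLengthSpace (Λ : Type*) [MetricSpace Λ] : Prop :=
  ∀ (u v : Λ) (ε : ℝ), 0 < ε → ∃ c ℓ, IsLipschitzPath c ℓ u v ∧ ℓ < dist u v + ε

/-- Every simple closed curve of `Λ`, parametrised with speed at most one, has length at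
least `m`. -/
def HasSystoleGE (Λ : Type*) [MetricSpace Λ] (m : ℝ) : Prop :=
  ∀ (ℓ : ℝ) (f : ℝ → Λ), 0 < ℓ → LipschitzWith 1 f → Periodic f ℓ → InjOn f (Ico 0 ℓ) → m ≤ ℓ

theorem HasSystoleGE.le_of_bigon (hsys : HasSystoleGE Λ m) (h₁ : IsArc c₁ ℓ₁ u v)
    (h₂ : IsArc c₂ ℓ₂ v u) (hℓ₁ : 0 < ℓ₁) (hdisj : ∀ s ∈ Ioo 0 ℓ₁, c₁ s ∉ c₂ '' Icc 0 ℓ₂) :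
    m ≤ ℓ₁ + ℓ₂ := by
  have hℓ : 0 < ℓ₁ + ℓ₂ := add_pos_of_pos_of_nonneg hℓ₁ h₂.nonneg
  have hdisj' : ∀ s ∈ Icc 0 ℓ₁, ∀ t ∈ Ioo 0 ℓ₂, c₁ s ≠ c₂ t := by
    intro s hs t ht hst
    have htI := Ioo_subset_Icc_self ht
    rcases eq_endpoints_or_mem_Ioo_of_mem_Icc hs with rfl | rfl | hs
    · exact ht.2.ne (h₂.injOn htI (right_mem_Icc.2 h₂.nonneg)
        (by rw [← hst, h₁.source, h₂.target]))
    · exact ht.1.ne' (h₂.injOn htI (left_mem_Icc.2 h₂.nonneg)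
        (by rw [← hst, h₁.target, h₂.source]))
    · exact hdisj s hs ⟨t, htI, hst.symm⟩
  have hinj : InjOn (concat c₁ ℓ₁ c₂) (Ico 0 (ℓ₁ + ℓ₂)) := by
    intro s hs t ht hst
    have hmem₂ : ∀ {x}, x ∈ Ico 0 (ℓ₁ + ℓ₂) → ℓ₁ < x → x - ℓ₁ ∈ Ioo 0 ℓ₂ :=
      fun hx hx' => ⟨by linarith, by linarith [hx.2]⟩
    rcases le_or_gt s ℓ₁ with hs' | hs' <;> rcases le_or_gt t ℓ₁ with ht' | ht'
    · rw [concat_of_le hs', concat_of_le ht'] at hst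
      exact h₁.injOn ⟨hs.1, hs'⟩ ⟨ht.1, ht'⟩ hst
    · rw [concat_of_le hs', concat_of_lt ht'] at hst
      exact absurd hst (hdisj' s ⟨hs.1, hs'⟩ _ (hmem₂ ht ht'))
    · rw [concat_of_lt hs', concat_of_le ht'] at hst
      exact absurd hst.symm (hdisj' t ⟨ht.1, ht'⟩ _ (hmem₂ hs hs'))
    · rw [concat_of_lt hs', concat_of_lt ht'] at hst
      exact sub_left_injective (h₂.injOn (Ioo_subset_Icc_self (hmem₂ hs hs'))
        (Ioo_subset_Icc_self (hmem₂ ht ht')) hst)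
  exact hsys _ _ hℓ ((h₁.toIsLipschitzPath.trans h₂.toIsLipschitzPath).lipschitzWith_periodize hℓ)
    (periodize_periodic _ hℓ) (periodize_injOn hinj hℓ)

theorem HasSystoleGE.image_subset_of_isArc (hsys : HasSystoleGE Λ m) (h₁ : IsArc c₁ ℓ₁ u v)
    (h₂ : IsArc c₂ ℓ₂ u v) (hlt : ℓ₁ + ℓ₂ < m) : c₁ '' Icc 0 ℓ₁ ⊆ c₂ '' Icc 0 ℓ₂ := by
  rintro _ ⟨t₀, ht₀, rfl⟩
  by_contra hnot
  have hclosed : IsClosed (c₁ ⁻¹' (c₂ '' Icc 0 ℓ₂)) :=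
    h₂.isCompact_image.isClosed.preimage h₁.lipschitz.continuous
  obtain ⟨a, ⟨a', ha', haa'⟩, b, ⟨b', hb', hbb'⟩, h0a, hab, hbℓ, hdisj⟩ :=
    exists_disjoint_Ioo_of_notMem hclosed
      ⟨0, left_mem_Icc.2 h₂.nonneg, by rw [h₁.source, h₂.source]⟩
      ⟨ℓ₂, right_mem_Icc.2 h₂.nonneg, by rw [h₁.target, h₂.target]⟩ ht₀ hnot
  obtain ⟨c', m', hc', hm', hsub⟩ := h₂.exists_isArc_between hb' ha'
  rw [haa', hbb'] at hc'
  have := hsys.le_of_bigon (h₁.restrict h0a hab.le hbℓ) hc' (sub_pos.2 hab) fun s hs hmem =>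
    hdisj (s + a) ⟨by linarith [hs.1], by linarith [hs.2]⟩ (hsub hmem)
  linarith

theorem IsLipschitzPath.dist_eq_sub (h : IsLipschitzPath c (dist u v) u v) (hs : 0 ≤ s)
    (hst : s ≤ t) (ht : t ≤ dist u v) : dist (c s) (c t) = t - s := by
  refine le_antisymm (dist_le_sub_of_lipschitzWith_one h.lipschitz hst) ?_
  have hs' := dist_le_sub_of_lipschitzWith_one h.lipschitz hs
  have ht' := dist_le_sub_of_lipschitzWith_one h.lipschitz ht
  have htri := dist_triangle4 (c 0) (c s) (c t) (c (dist u v))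
  rw [h.target] at ht'
  rw [h.source, h.target] at htri
  rw [h.source] at hs'
  linarith

theorem IsLipschitzPath.dist_source (h : IsLipschitzPath c (dist u v) u v)
    (ht : t ∈ Icc 0 (dist u v)) : dist u (c t) = t := by
  simpa [h.source] using h.dist_eq_sub le_rfl ht.1 ht.2

theorem IsLipschitzPath.isArc_of_dist (h : IsLipschitzPath c (dist u v) u v) :
    IsArc c (dist u v) u v where
  toIsLipschitzPath := h
  injOn s hs t ht hst := by rw [← h.dist_source hs, hst, h.dist_source ht]

theorem HasSystoleGE.geodesic_image_subset (hsys : HasSystoleGE Λ m)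
    (h : IsLipschitzPath c (dist u v) u v) (hp : IsLipschitzPath p ℓ u v) (hlt : dist u v + ℓ < m) :
    c '' Icc 0 (dist u v) ⊆ p '' Icc 0 ℓ := by
  obtain ⟨c', ℓ', hℓ', hc'⟩ := hp.exists_isShortestPathIn
  exact (hsys.image_subset_of_isArc h.isArc_of_dist hc'.isArc (by linarith)).trans
    hc'.mapsTo.image_subset

theorem HasSystoleGE.geodesic_unique (hsys : HasSystoleGE Λ (2 * r))
    (h : IsLipschitzPath c (dist u v) u v) (hp : IsLipschitzPath p (dist u v) u v)
    (huv : dist u v < r) : EqOn c p (Icc 0 (dist u v)) := by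
  intro t ht
  obtain ⟨s, hs, hst⟩ := hsys.geodesic_image_subset h hp (by linarith) (mem_image_of_mem c ht)
  rw [← hst, ← hp.dist_source hs, hst, h.dist_source ht]

theorem IsLengthSpace.exists_geodesic (hlen : IsLengthSpace Λ) (hsys : HasSystoleGE Λ (2 * r))
    (huv : dist u v < r) : ∃ c, IsLipschitzPath c (dist u v) u v := by
  obtain ⟨p₁, ℓ₁, hp₁, hℓ₁⟩ := hlen u v (r - dist u v) (by linarith)
  obtain ⟨c₁, m₁, hm₁, hc₁⟩ := hp₁.exists_isShortestPathIn
  suffices hle : m₁ ≤ dist u v by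
    obtain rfl := hle.antisymm hc₁.dist_le
    exact ⟨c₁, hc₁.toIsLipschitzPath⟩
  refine le_of_forall_pos_le_add fun ε hε => ?_
  obtain ⟨p₂, ℓ₂, hp₂, hℓ₂⟩ := hlen u v (min ε (r - dist u v)) (lt_min hε (by linarith))
  obtain ⟨c₂, m₂, hm₂, hc₂⟩ := hp₂.exists_isShortestPathIn
  have hsub := hsys.image_subset_of_isArc hc₂.isArc hc₁.isArc
    (by linarith [min_le_right ε (r - dist u v)])
  have hm₁₂ := hc₁.le_of_mapsTo hc₂.toIsLipschitzPath fun t ht =>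
    hc₁.mapsTo.image_subset (hsub (mem_image_of_mem c₂ ht))
  linarith [min_le_left ε (r - dist u v)]

end Systole

section Contraction

variable {Λ : Type*} [MetricSpace Λ] {c c' : ℝ → Λ} {r t' : ℝ} {u v u' v' : Λ}

theorem IsLengthSpace.exists_dist_geodesic_le (hlen : IsLengthSpace Λ)
    (hsys : HasSystoleGE Λ (2 * r)) (h : IsLipschitzPath c (dist u v) u v)
    (h' : IsLipschitzPath c' (dist u' v') u' v')
    (hlt : dist u v + dist u' v' + (dist u u' + dist v v') < 2 * r) (hu : dist u u' < r)
    (hv : dist v v' < r) (ht' : t' ∈ Icc 0 (dist u' v')) :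
    ∃ t ∈ Icc 0 (dist u v), dist (c' t') (c t) ≤ dist u u' + dist v v' := by
  rw [dist_comm u u'] at *
  obtain ⟨c₁, hc₁⟩ := hlen.exists_geodesic hsys hu
  obtain ⟨c₂, hc₂⟩ := hlen.exists_geodesic hsys hv
  obtain ⟨s, hs, hs_eq⟩ := hsys.geodesic_image_subset h' (hc₁.trans (h.trans hc₂)) (by linarith)
    (mem_image_of_mem c' ht')
  rcases hs_eq ▸ concat_mem_union hs with ⟨x, hx, hx_eq⟩ | ⟨x, hx, hx_eq⟩
  · refine ⟨0, left_mem_Icc.2 dist_nonneg, ?_⟩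
    have := dist_le_sub_of_lipschitzWith_one hc₁.lipschitz hx.2
    rw [hc₁.target, hx_eq] at this
    rw [h.source]
    linarith [hx.1, dist_nonneg (x := v) (y := v')]
  · rcases hx_eq ▸ concat_mem_union hx with ⟨y, hy, hy_eq⟩ | ⟨y, hy, hy_eq⟩
    · exact ⟨y, hy, by rw [← hy_eq, dist_self]; positivity⟩
    · refine ⟨_, right_mem_Icc.2 dist_nonneg, ?_⟩
      have := dist_le_sub_of_lipschitzWith_one hc₂.lipschitz hy.1
      rw [hc₂.source, hy_eq, dist_comm] at this
      rw [h.target]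
      linarith [hy.2, dist_nonneg (x := u') (y := u)]

theorem IsLengthSpace.dist_geodesic_le (hlen : IsLengthSpace Λ)
    (hsys : HasSystoleGE Λ (2 * r)) (h : IsLipschitzPath c (dist u v) u v)
    (h' : IsLipschitzPath c' (dist u' v') u' v')
    (hlt : dist u v + dist u' v' + (dist u u' + dist v v') < 2 * r) (hu : dist u u' < r)
    (hv : dist v v' < r) (ht' : t' ∈ Icc 0 (dist u' v')) (t : ℝ) :
    dist (c' t') (c t) ≤ 3 * (dist u u' + dist v v') + |t' - t| := by
  obtain ⟨s, hs, hs_le⟩ := hlen.exists_dist_geodesic_le hsys h h' hlt hu hv ht'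
  have hst : |s - t'| ≤ dist u u' + dist (c s) (c' t') := by
    nth_rewrite 1 [← h.dist_source hs, ← h'.dist_source ht']
    rw [← Real.dist_eq]
    exact dist_dist_dist_le _ _ _ _
  have htri := dist_triangle (c' t') (c s) (c t)
  have hlip := dist_le_abs_sub_of_lipschitzWith_one h.lipschitz s t
  have habs := abs_sub_le s t' t
  rw [dist_comm (c s)] at hst
  linarith [dist_nonneg (x := v) (y := v')]

end Contraction

section ShortGeodesic

variable {Λ : Type*} [MetricSpace Λ] {r : ℝ} {u v : Λ}

open Classical in
/-- A geodesic from `u` to `v` on `[0, dist u v]`, if there is one; otherwise a junk value. -/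
def shortGeodesic (u v : Λ) : ℝ → Λ :=
  if h : ∃ c, IsLipschitzPath c (dist u v) u v then h.choose else fun _ => u

theorem IsLengthSpace.isLipschitzPath_shortGeodesic (hlen : IsLengthSpace Λ)
    (hsys : HasSystoleGE Λ (2 * r)) (huv : dist u v < r) :
    IsLipschitzPath (shortGeodesic u v) (dist u v) u v := by
  have hex := hlen.exists_geodesic hsys huv
  rw [shortGeodesic, dif_pos hex]
  exact hex.choose_spec

theorem IsLengthSpace.continuousOn_shortGeodesic (hlen : IsLengthSpace Λ)
    (hsys : HasSystoleGE Λ (2 * r)) :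
    ContinuousOn (fun q : (Λ × Λ) × ℝ => shortGeodesic q.1.1 q.1.2 (q.2 * dist q.1.1 q.1.2))
      {q | dist q.1.1 q.1.2 < r ∧ q.2 ∈ Icc 0 1} := by
  rintro ⟨⟨u₀, v₀⟩, s₀⟩ ⟨huv₀, -⟩
  dsimp only at huv₀
  have hmem : ∀ {u v : Λ} {s : ℝ}, s ∈ Icc 0 1 → s * dist u v ∈ Icc 0 (dist u v) := fun hs =>
    ⟨mul_nonneg hs.1 dist_nonneg, mul_le_of_le_one_left dist_nonneg hs.2⟩
  let bound : (Λ × Λ) × ℝ → ℝ := fun q =>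
    3 * (dist u₀ q.1.1 + dist v₀ q.1.2) + |q.2 * dist q.1.1 q.1.2 - s₀ * dist u₀ v₀|
  have hbound : Tendsto bound (𝓝 ((u₀, v₀), s₀)) (𝓝 0) := by
    have hcont : Continuous bound := by fun_prop
    simpa [bound] using hcont.tendsto ((u₀, v₀), s₀)
  have hnear : ∀ᶠ q : (Λ × Λ) × ℝ in 𝓝 ((u₀, v₀), s₀),
      dist u₀ v₀ + dist q.1.1 q.1.2 + (dist u₀ q.1.1 + dist v₀ q.1.2) < 2 * r ∧
        dist u₀ q.1.1 < r ∧ dist v₀ q.1.2 < r := by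
    have hr : 0 < r := dist_nonneg.trans_lt huv₀
    refine .and ?_ (.and ?_ ?_) <;>
      exact ContinuousAt.eventually_lt (by fun_prop) continuousAt_const (by simp; linarith)
  rw [ContinuousWithinAt, tendsto_iff_dist_tendsto_zero]
  refine squeeze_zero' (.of_forall fun _ => dist_nonneg) ?_ (hbound.mono_left nhdsWithin_le_nhds)
  filter_upwards [nhdsWithin_le_nhds hnear, self_mem_nhdsWithin] with q ⟨hlt, hu, hv⟩ ⟨hq, hqs⟩
  exact hlen.dist_geodesic_le hsys (hlen.isLipschitzPath_shortGeodesic hsys huv₀)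
    (hlen.isLipschitzPath_shortGeodesic hsys hq) hlt hu hv (hmem hqs) _

theorem IsLengthSpace.freelyHomotopicLoops_of_dist_lt (hlen : IsLengthSpace Λ)
    (hsys : HasSystoleGE Λ (2 * r)) {f g : ℝ → Λ} (hf : Continuous f)
    (hg : Continuous g) (hfper : Periodic f 1) (hgper : Periodic g 1)
    (hfg : ∀ t ∈ Ico (0 : ℝ) 1, dist (f t) (g t) < r) : FreelyHomotopicLoops f g := by
  have hfg : ∀ t, dist (f t) (g t) < r := fun t => by
    have hper : Periodic (fun t => dist (f t) (g t)) 1 := fun t => by simp only [hfper t, hgper t]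
    obtain ⟨x, hx, htx⟩ := hper.exists_mem_Ico₀ one_pos t
    exact htx.trans_lt (hfg x hx)
  have hgeod := fun t => hlen.isLipschitzPath_shortGeodesic hsys (hfg t)
  let φ : ℝ × ℝ → (Λ × Λ) × ℝ := fun p => ((f p.2, g p.2), projIcc 0 1 zero_le_one p.1)
  have hφ : Continuous φ := by fun_prop
  refine ⟨fun p => shortGeodesic (f p.2) (g p.2)
      (projIcc (0 : ℝ) 1 zero_le_one p.1 * dist (f p.2) (g p.2)), ?_, fun t => ?_, fun t => ?_,
    fun s t => ?_⟩
  · exact (hlen.continuousOn_shortGeodesic hsys).comp_continuous hφ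
      fun p => ⟨hfg p.2, Subtype.mem _⟩
  · simp [(hgeod t).source]
  · simp [(hgeod t).target]
  · simp only [hfper t, hgper t]

end ShortGeodesic

/-! ### Shortest loops in a free homotopy class -/

section ShortestLoop

variable {Λ : Type*} [MetricSpace Λ] {γ δ c : ℝ → Λ} {r M d a b x : ℝ}

theorem exists_finite_forall_dist_lt (hr : 0 < r) (C : ℝ≥0) : ∃ T : Set ℝ, T.Finite ∧
    ∀ F G : ℝ → Λ, LipschitzWith C F → LipschitzWith C G → (∀ x ∈ T, dist (F x) (G x) < r / 2) →
      ∀ t ∈ Ico (0 : ℝ) 1, dist (F t) (G t) < r := by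
  have hmesh : 0 < r / (4 * (C + 1)) := by positivity
  obtain ⟨T, -, hT, hcover⟩ := (isCompact_Icc (a := (0 : ℝ)) (b := 1)).finite_cover_balls hmesh
  refine ⟨T, hT, fun F G hF hG hFG t ht => ?_⟩
  obtain ⟨x, hxT, hxt⟩ := mem_iUnion₂.1 (hcover (Ico_subset_Icc_self ht))
  have hCx : C * dist t x ≤ r / 4 := calc
    C * dist t x ≤ (C + 1) * (r / (4 * (C + 1))) := by
      gcongr
      exacts [by linarith, (mem_ball.1 hxt).le]
    _ = r / 4 := by field_simp
  calc dist (F t) (G t) ≤ dist (F t) (F x) + dist (F x) (G x) + dist (G x) (G t) :=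
        dist_triangle4 _ _ _ _
    _ < r / 4 + r / 2 + r / 4 := by
        have hGx := hG.dist_le_mul x t
        rw [dist_comm x t] at hGx
        linarith [hF.dist_le_mul t x, hFG x hxT]
    _ = r := by ring

theorem IsLengthSpace.isClosed_freelyHomotopicLoops (hlen : IsLengthSpace Λ)
    (hsys : HasSystoleGE Λ (2 * r)) (hr : 0 < r) (γ : ℝ → Λ) (C : ℝ≥0) :
    IsClosed {F : ℝ → Λ | (Periodic F 1 ∧ FreelyHomotopicLoops γ F) ∧ LipschitzWith C F} := by
  have hper : IsClosed {F : ℝ → Λ | Periodic F 1} := by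
    simp only [Periodic, ofPred_forall]
    exact isClosed_iInter fun t => isClosed_eq (continuous_apply _) (continuous_apply _)
  have hclosed : IsClosed {F : ℝ → Λ | Periodic F 1 ∧ LipschitzWith C F} :=
    hper.inter (isClosed_setOfPred_lipschitzWith C)
  rw [isClosed_iff_frequently]
  intro F hF
  obtain ⟨hFper, hFlip⟩ := hclosed.mem_of_frequently_of_tendsto
    (hF.mono fun G hG => ⟨hG.1.1, hG.2⟩) tendsto_id
  obtain ⟨T, hT, hclose⟩ := exists_finite_forall_dist_lt (Λ := Λ) hr C
  have hnear : ∀ᶠ G in 𝓝 F, ∀ x ∈ T, dist (G x) (F x) < r / 2 :=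
    (eventually_all_finite hT).2 fun x _ =>
      (continuous_apply x).continuousAt.eventually (ball_mem_nhds (F x) (half_pos hr))
  obtain ⟨G, ⟨⟨hGper, hγG⟩, hGlip⟩, hGF⟩ := (hF.and_eventually hnear).exists
  exact ⟨⟨hFper, hγG.trans (hlen.freelyHomotopicLoops_of_dist_lt hsys hGlip.continuous
    hFlip.continuous hGper hFper (hclose G F hGlip hFlip hGF))⟩, hFlip⟩

/-- `δ`, of period `M`, is a shortest loop among those in the image of the loop `γ` which are
freely homotopic to `γ`. Confining the competitors to the image of `γ` makes a shortest one exist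
although `Λ` need not be proper. -/
structure IsShortestLoop (γ δ : ℝ → Λ) (M : ℝ) : Prop where
  pos : 0 < M
  lipschitz : LipschitzWith 1 δ
  periodic : Periodic δ M
  mem_range : ∀ t, δ t ∈ range γ
  freelyHomotopicLoops : FreelyHomotopicLoops γ fun t => δ (M * t)
  le_of_freelyHomotopicLoops : ∀ ⦃δ' M'⦄, 0 < M' → LipschitzWith 1 δ' → Periodic δ' M' →
    (∀ t, δ' t ∈ range γ) → FreelyHomotopicLoops γ (fun t => δ' (M' * t)) → M ≤ M'

theorem periodic_comp_mul_left {α : Type*} {f : ℝ → α} (hf : Periodic f M) :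
    Periodic (fun t => f (M * t)) 1 := fun t => by
  simp only [mul_add, mul_one, hf (M * t)]

theorem IsLengthSpace.exists_isShortestLoop (hlen : IsLengthSpace Λ)
    (hsys : HasSystoleGE Λ (2 * r)) (hr : 0 < r) {K : ℝ≥0} (hγ : LipschitzWith K γ)
    (hγper : Periodic γ 1) (hγnull : ∀ b, ¬ FreelyHomotopicLoops γ fun _ => b) :
    ∃ (δ : ℝ → Λ) (M : ℝ), M ≤ K ∧ IsShortestLoop γ δ M := by
  obtain ⟨F, ⟨hFper, hγF⟩, C, hCK, hF, hFmem, hFmin⟩ := exists_lipschitzWith_minimal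
    (P := {F | Periodic F 1 ∧ FreelyHomotopicLoops γ F})
    (hγper.compact_of_continuous one_ne_zero hγ.continuous)
    (hlen.isClosed_freelyHomotopicLoops hsys hr γ) ⟨hγper, .refl hγ.continuous hγper⟩ hγ
    mem_range_self
  have hC : 0 < (C : ℝ) := by
    refine NNReal.coe_pos.2 (pos_iff_ne_zero.2 fun hC => hγnull (F 0) ?_)
    have hconst : F = fun _ => F 0 := funext fun t =>
      dist_le_zero.1 (by simpa [hC] using hF.dist_le_mul t 0)
    exact hconst ▸ hγF
  refine ⟨fun t => F (t / C), C, NNReal.coe_le_coe.2 hCK, hC,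
    (IsLipschitzPath.of_lipschitzWith hF).lipschitz, fun t => ?_, fun t => hFmem _, ?_,
    fun δ' M' hM' hδ' hper' hmem' hfh' => ?_⟩
  · simp only [add_div, div_self hC.ne', hFper (t / C)]
  · simpa only [mul_div_cancel_left₀ _ hC.ne'] using hγF
  · refine hFmin _ ⟨periodic_comp_mul_left hper', hfh'⟩ ⟨M', hM'.le⟩ (.of_dist_le_mul fun s t => ?_)
      fun t => hmem' _
    refine (dist_le_abs_sub_of_lipschitzWith_one hδ' _ _).trans_eq ?_
    rw [← mul_sub, abs_mul, abs_of_pos hM', Real.dist_eq]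
    rfl

theorem IsShortestLoop.comp_add_const (h : IsShortestLoop γ δ M) (a : ℝ) :
    IsShortestLoop γ (fun t => δ (t + a)) M where
  pos := h.pos
  lipschitz := lipschitzWith_one_of_dist_le_sub fun s t hst => by
    simpa using dist_le_sub_of_lipschitzWith_one h.lipschitz (add_le_add_left hst a)
  periodic := h.periodic.add_const a
  mem_range t := h.mem_range _
  freelyHomotopicLoops := by
    have hshift := freelyHomotopicLoops_comp_add_const
      (h.lipschitz.continuous.comp (continuous_const_mul M)) (periodic_comp_mul_left h.periodic)
      (a / M)
    simpa only [comp_apply, mul_add, mul_div_cancel₀ a h.pos.ne'] using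
      h.freelyHomotopicLoops.trans hshift
  le_of_freelyHomotopicLoops := h.le_of_freelyHomotopicLoops

theorem IsLipschitzPath.dist_shortcut_lt (hδ : LipschitzWith 1 δ)
    (hc : IsLipschitzPath c d (δ 0) (δ b)) (hdb : d ≤ b) (hbr : b < r) (hbM : b ≤ M)
    (hx : x ∈ Icc (0 : ℝ) 1) :
    dist (concat c d (fun t => δ (t + b)) ((d + (M - b)) * x)) (δ (M * x)) < r := by
  have hd := hc.nonneg
  have hMx : 0 ≤ M * x := mul_nonneg (by linarith) hx.1
  have hslack : 0 ≤ (b - d) * (1 - x) := mul_nonneg (by linarith) (by linarith [hx.2])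
  have hslack' : 0 ≤ (b - d) * x := mul_nonneg (by linarith) hx.1
  set y := (d + (M - b)) * x with hy
  have hyx : y - d + b = M * x + (b - d) * (1 - x) := by rw [hy]; ring
  rcases le_or_gt y d with hyd | hyd
  · rw [concat_of_le hyd]
    have hy0 : 0 ≤ y := mul_nonneg (by linarith) hx.1
    have hcy₀ := dist_le_sub_of_lipschitzWith_one hc.lipschitz hy0
    have hcy₁ := dist_le_sub_of_lipschitzWith_one hc.lipschitz hyd
    have hδ₀ := dist_le_sub_of_lipschitzWith_one hδ hMx
    have hδ₁ := dist_le_abs_sub_of_lipschitzWith_one hδ b (M * x)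
    have htri₀ := dist_triangle_left (c y) (δ (M * x)) (δ 0)
    have htri₁ := dist_triangle (c y) (δ b) (δ (M * x))
    rw [hc.source] at hcy₀
    rw [hc.target] at hcy₁
    rcases le_total (M * x) b with hMxb | hMxb
    · rw [abs_of_nonneg (sub_nonneg.2 hMxb)] at hδ₁
      linarith
    · rw [abs_of_nonpos (sub_nonpos.2 hMxb)] at hδ₁
      linarith
  · rw [concat_of_lt hyd]
    refine (dist_le_abs_sub_of_lipschitzWith_one hδ _ _).trans_lt ?_
    rw [hyx, add_sub_cancel_left, abs_of_nonneg hslack]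
    linarith

theorem IsShortestLoop.dist_zero_eq (h : IsShortestLoop γ δ M) (hlen : IsLengthSpace Λ)
    (hsys : HasSystoleGE Λ (2 * r)) (hb : 0 ≤ b) (hbr : b < r) (hbM : b < M) :
    dist (δ 0) (δ b) = b := by
  have hδb : IsLipschitzPath (fun t => δ (t + 0)) (b - 0) (δ 0) (δ b) :=
    .of_lipschitzWith_one h.lipschitz hb
  have hle : dist (δ 0) (δ b) ≤ b := by simpa using hδb.dist_le
  set d := dist (δ 0) (δ b)
  obtain ⟨c, hc⟩ := hlen.exists_geodesic hsys (hle.trans_lt hbr)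
  have hp := hc.trans (.of_lipschitzWith_one h.lipschitz hbM.le)
  rw [show δ M = δ 0 by simpa using h.periodic 0] at hp
  have hM' : 0 < d + (M - b) := add_pos_of_nonneg_of_pos dist_nonneg (sub_pos.2 hbM)
  have hmem : ∀ t, periodize (concat c d fun t => δ (t + b)) hM' t ∈ range γ := by
    intro t
    obtain ⟨s, hs, hst⟩ := periodize_mem_image (concat c d fun t => δ (t + b)) hM' t
    rcases hst ▸ concat_mem_union hs with hcs | ⟨s', -, hs'⟩
    · obtain ⟨s', -, hs'⟩ := hsys.geodesic_image_subset hc hδb (by linarith) hcs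
      exact hs' ▸ h.mem_range _
    · exact hs' ▸ h.mem_range _
  have hlip := hp.lipschitzWith_periodize hM'
  have hper := periodize_periodic (concat c d fun t => δ (t + b)) hM'
  have hfh := hlen.freelyHomotopicLoops_of_dist_lt hsys
    (h.lipschitz.continuous.comp (continuous_const_mul M))
    (hlip.continuous.comp (continuous_const_mul _)) (periodic_comp_mul_left h.periodic)
    (periodic_comp_mul_left hper) fun x hx => by
      rw [comp_apply, comp_apply, dist_comm,
        periodize_of_mem _ hM' ⟨mul_nonneg hM'.le hx.1, mul_lt_of_lt_one_right hM' hx.2⟩]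
      exact hc.dist_shortcut_lt h.lipschitz hle hbr hbM.le (Ico_subset_Icc_self hx)
  linarith [h.le_of_freelyHomotopicLoops hM' hlip hper hmem (h.freelyHomotopicLoops.trans hfh)]

theorem IsShortestLoop.dist_eq (h : IsShortestLoop γ δ M) (hlen : IsLengthSpace Λ)
    (hsys : HasSystoleGE Λ (2 * r)) (hab : a ≤ b) (hr : b - a < r) (hM : b - a < M) :
    dist (δ a) (δ b) = b - a := by
  simpa using (h.comp_add_const a).dist_zero_eq hlen hsys (sub_nonneg.2 hab) hr hM

theorem IsShortestLoop.ne_of_sub_le_half (h : IsShortestLoop γ δ M) (hlen : IsLengthSpace Λ)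
    (hsys : HasSystoleGE Λ (2 * r)) (hMr : M < 4 * r) (hab : a < b) (hba : b - a ≤ M / 2) :
    δ a ≠ δ b := by
  intro hδ
  obtain ⟨m, η, rfl, rfl⟩ : ∃ m η, a = m - η ∧ b = m + η :=
    ⟨(a + b) / 2, (b - a) / 2, by ring, by ring⟩
  have hdist : dist (δ m) (δ (m + η)) = η := by
    simpa using h.dist_eq hlen hsys (a := m) (b := m + η) (by linarith) (by linarith) (by linarith)
  have hright : IsLipschitzPath (fun t => δ (t + m)) (dist (δ m) (δ (m + η))) (δ m)
      (δ (m + η)) := by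
    rw [hdist]
    simpa using IsLipschitzPath.of_lipschitzWith_one h.lipschitz (show m ≤ m + η by linarith)
  have hleft : IsLipschitzPath (fun t => δ (η - t + (m - η))) (dist (δ m) (δ (m + η))) (δ m)
      (δ (m + η)) := by
    rw [hdist, ← hδ]
    simpa using (IsLipschitzPath.of_lipschitzWith_one h.lipschitz
      (show m - η ≤ m by linarith)).symm
  have heq := hsys.geodesic_unique hright hleft (by linarith) (x := η / 2)
    ⟨by linarith, by linarith⟩
  have hne := h.dist_eq hlen hsys (a := m - η / 2) (b := m + η / 2) (by linarith) (by linarith)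
    (by linarith)
  simp only [show η - η / 2 + (m - η) = m - η / 2 by ring, add_comm (η / 2)] at heq
  rw [heq, dist_self] at hne
  linarith

theorem IsShortestLoop.injOn (h : IsShortestLoop γ δ M) (hlen : IsLengthSpace Λ)
    (hsys : HasSystoleGE Λ (2 * r)) (hMr : M < 4 * r) : InjOn δ (Ico 0 M) := by
  have key : ∀ a ∈ Ico 0 M, ∀ b ∈ Ico 0 M, δ a = δ b → b ≤ a := by
    intro a ha b hb hδ
    by_contra! hab
    rcases le_total (b - a) (M / 2) with hba | hba
    · exact h.ne_of_sub_le_half hlen hsys hMr hab hba hδ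
    · refine h.ne_of_sub_le_half hlen hsys hMr (a := b) (b := a + M) (by linarith [ha.1, hb.2])
        (by linarith) ?_
      rw [h.periodic, hδ]
  exact fun a ha b hb hδ => (key b hb a ha hδ.symm).antisymm (key a ha b hb hδ)

end ShortestLoop

/-! ### Simple closed geodesics in pseudo-extended-metric spaces -/

section SimpleClosedGeodesic

variable {Y : Type*} [PseudoEMetricSpace Y] {Λ : Type*} [MetricSpace Λ] {r M : ℝ}

/-- Simple closed geodesics of length `M`: `M`-periodic, locally minimising unit-speed curves
without self-intersections over one period. -/
structure IsSimpleClosedGeodesic (δ : ℝ → Y) (M : ℝ) : Prop where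
  pos : 0 < M
  periodic : Periodic δ M
  locally_minimising : ∀ t, ∃ ε, 0 < ε ∧ ∀ a ∈ Icc (t - ε) (t + ε), ∀ b ∈ Icc (t - ε) (t + ε),
    edist (δ a) (δ b) = ENNReal.ofReal |a - b|
  injOn : InjOn δ (Ico 0 M)

theorem IsSimpleClosedGeodesic.comp_isometry {δ : ℝ → Λ} {i : Λ → Y}
    (h : IsSimpleClosedGeodesic δ M) (hi : Isometry i) : IsSimpleClosedGeodesic (i ∘ δ) M where
  pos := h.pos
  periodic := h.periodic.comp i
  locally_minimising t := by simpa only [comp_apply, hi.edist_eq] using h.locally_minimising t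
  injOn := hi.injective.comp_injOn h.injOn

theorem IsShortestLoop.isSimpleClosedGeodesic {γ δ : ℝ → Λ} (h : IsShortestLoop γ δ M)
    (hlen : IsLengthSpace Λ) (hsys : HasSystoleGE Λ (2 * r)) (hMr : M < 4 * r) :
    IsSimpleClosedGeodesic δ M where
  pos := h.pos
  periodic := h.periodic
  locally_minimising t := by
    have hM := h.pos
    have hε : 0 < min r M := lt_min (by linarith) hM
    have hr_le := min_le_left r M
    have hM_le := min_le_right r M
    refine ⟨min r M / 3, by positivity, fun a ha b hb => ?_⟩
    rw [edist_dist]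
    congr 1
    wlog hab : a ≤ b generalizing a b
    · rw [dist_comm, abs_sub_comm]
      exact this b hb a ha (le_of_not_ge hab)
    rw [abs_sub_comm, abs_of_nonneg (sub_nonneg.2 hab)]
    exact h.dist_eq hlen hsys hab (by linarith [ha.1, hb.2]) (by linarith [ha.1, hb.2])
  injOn := h.injOn hlen hsys hMr

end SimpleClosedGeodesic

theorem lipschitzWith_comp_mul_left {Y : Type*} [PseudoEMetricSpace Y] {f : ℝ → Y} {ℓ : ℝ}
    (hf : LipschitzWith 1 f) (hℓ : 0 ≤ ℓ) : LipschitzWith ℓ.toNNReal fun t => f (ℓ * t) := by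
  have hmul : LipschitzWith ℓ.toNNReal fun t : ℝ => ℓ * t := .of_dist_le_mul fun s t => by
    rw [Real.dist_eq, ← mul_sub, abs_mul, abs_of_nonneg hℓ, Real.coe_toNNReal _ hℓ, Real.dist_eq]
  exact one_mul ℓ.toNNReal ▸ hf.comp hmul

section FiniteComponent

variable {Y : Type*} [PseudoEMetricSpace Y] {Λ : Type*} [MetricSpace Λ] {b : Y} {i : Λ → Y}
  {κ : Y → Λ} {m r : ℝ}

/-- The metric space `Λ` is the set of points of `Y` at finite distance from `b`, with points at
distance zero identified: `i` chooses representatives and `κ` is the quotient map, with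
unspecified values at infinite distance from `b`. -/
structure IsFiniteComponent (b : Y) (i : Λ → Y) (κ : Y → Λ) : Prop where
  isometry : Isometry i
  edist_base_ne_top : ∀ a, edist b (i a) ≠ ⊤
  inseparable : ∀ y, edist b y ≠ ⊤ → Inseparable (i (κ y)) y

theorem exists_isFiniteComponent.{v} {Y : Type v} [PseudoEMetricSpace Y] (b : Y) :
    ∃ (Λ : Type v) (_ : MetricSpace Λ) (i : Λ → Y) (κ : Y → Λ), IsFiniteComponent b i κ := by
  classical
  let Λ := eball (SeparationQuotient.mk b) ⊤
  let i : Λ → Y := fun p => Quotient.out p.1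
  have hi : ∀ p, SeparationQuotient.mk (i p) = p := fun p => Quotient.out_eq p.1
  let κ : Y → Λ := fun y =>
    if h : edist y b < ⊤ then ⟨SeparationQuotient.mk y, h⟩
    else ⟨_, mem_eball_self ENNReal.zero_lt_top⟩
  refine ⟨Λ, metricSpaceEMetricBall (SeparationQuotient.mk b) ⊤, i, κ, ?_⟩
  let _ : MetricSpace Λ := metricSpaceEMetricBall (SeparationQuotient.mk b) ⊤
  refine ⟨fun p q => ?_, fun p => ?_, fun y hy => ?_⟩
  · rw [← SeparationQuotient.edist_mk, hi, hi]
    rfl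
  · rw [← SeparationQuotient.edist_mk, hi, edist_comm]
    exact (mem_eball.1 p.2).ne
  · rw [← SeparationQuotient.mk_eq_mk, hi]
    simp only [κ, dif_pos (edist_comm b y ▸ hy.lt_top)]

namespace IsFiniteComponent

theorem eq_of_inseparable (h : IsFiniteComponent b i κ) {a a' : Λ}
    (ha : Inseparable (i a) (i a')) : a = a' := by
  rwa [EMetric.inseparable_iff, h.isometry.edist_eq, edist_eq_zero] at ha

theorem inseparable_of_lipschitzWith (h : IsFiniteComponent b i κ) {K : ℝ≥0} {f : ℝ → Y}
    (hf : LipschitzWith K f) (hb : edist b (f 0) ≠ ⊤) (t : ℝ) :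
    Inseparable (i (κ (f t))) (f t) := by
  refine h.inseparable _ (ne_top_of_le_ne_top ?_ (edist_triangle b (f 0) (f t)))
  exact ENNReal.add_ne_top.2 ⟨hb, ne_top_of_le_ne_top
    (ENNReal.mul_ne_top ENNReal.coe_ne_top (edist_ne_top 0 t)) (hf 0 t)⟩

theorem lipschitzWith_comp (h : IsFiniteComponent b i κ) {K : ℝ≥0} {f : ℝ → Y}
    (hf : LipschitzWith K f) (hb : edist b (f 0) ≠ ⊤) : LipschitzWith K (κ ∘ f) := by
  intro s t
  have hs := h.inseparable_of_lipschitzWith hf hb s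
  have ht := h.inseparable_of_lipschitzWith hf hb t
  rw [comp_apply, comp_apply, ← h.isometry.edist_eq, edist_congr hs.edist_eq_zero ht.edist_eq_zero]
  exact hf s t

theorem hasSystoleGE (h : IsFiniteComponent b i κ)
    (hsys : ∀ γ : ℝ → Y, Continuous γ → Periodic γ 1 → InjOn γ (Ico 0 1) →
      ENNReal.ofReal m ≤ eVariationOn γ (Icc 0 1)) : HasSystoleGE Λ m := by
  intro ℓ f hℓ hf hper hinj
  have hlip : LipschitzWith ℓ.toNNReal fun t => i (f (ℓ * t)) :=
    lipschitzWith_comp_mul_left (f := i ∘ f) (one_mul (1 : ℝ≥0) ▸ h.isometry.lipschitz.comp hf)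
      hℓ.le
  have hle := hsys _ hlip.continuous ((periodic_comp_mul_left hper).comp i) fun s hs t ht hst =>
    mul_left_cancel₀ hℓ.ne' (hinj ⟨mul_nonneg hℓ.le hs.1, mul_lt_of_lt_one_right hℓ hs.2⟩
      ⟨mul_nonneg hℓ.le ht.1, mul_lt_of_lt_one_right hℓ ht.2⟩ (h.isometry.injective hst))
  have hvar := (hlip.lipschitzOnWith (s := univ)).comp_eVariationOn_le (mapsTo_univ id (Icc 0 1))
  rw [eVariationOn_id_Icc, sub_zero, ENNReal.ofReal_one, mul_one, comp_id] at hvar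
  exact (ENNReal.ofReal_le_ofReal_iff hℓ.le).1 (hle.trans hvar)

end IsFiniteComponent

/-- Length spaces among the pseudo-extended-metric spaces: points at distance less than `r` are
joined, up to distance zero, by a path of length less than `r`. -/
def IsPseudoLengthSpace (Y : Type*) [PseudoEMetricSpace Y] : Prop :=
  ∀ (u v : Y) (r : ℝ), edist u v < ENNReal.ofReal r → ∃ (c : ℝ → Y) (ℓ : ℝ), LipschitzWith 1 c ∧
    0 ≤ ℓ ∧ ℓ < r ∧ edist (c 0) u = 0 ∧ edist (c ℓ) v = 0

theorem IsFiniteComponent.isLengthSpace (h : IsFiniteComponent b i κ)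
    (hlen : IsPseudoLengthSpace Y) : IsLengthSpace Λ := by
  intro u v ε hε
  have huv : edist (i u) (i v) < ENNReal.ofReal (dist u v + ε) := by
    rw [h.isometry.edist_eq, edist_dist]
    exact (ENNReal.ofReal_lt_ofReal_iff (by positivity)).2 (by linarith)
  obtain ⟨c, ℓ, hc, hℓ, hℓr, hc₀, hcℓ⟩ := hlen _ _ _ huv
  have hb : edist b (c 0) ≠ ⊤ := by
    rw [edist_congr_left hc₀]
    exact h.edist_base_ne_top u
  have hκ := h.inseparable_of_lipschitzWith hc hb
  exact ⟨κ ∘ c, ℓ, ⟨h.lipschitzWith_comp hc hb, hℓ,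
    h.eq_of_inseparable ((hκ 0).trans (EMetric.inseparable_iff.2 hc₀)),
    h.eq_of_inseparable ((hκ ℓ).trans (EMetric.inseparable_iff.2 hcℓ))⟩, hℓr⟩

theorem IsPseudoLengthSpace.exists_isSimpleClosedGeodesic (hlen : IsPseudoLengthSpace Y)
    (hsys : ∀ γ : ℝ → Y, Continuous γ → Periodic γ 1 → InjOn γ (Ico 0 1) →
      ENNReal.ofReal (2 * r) ≤ eVariationOn γ (Icc 0 1))
    {K : ℝ≥0} (hKr : K < 4 * r) {γ : ℝ → Y} (hγ : LipschitzWith K γ) (hγper : Periodic γ 1)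
    (hγnull : ∀ y, ¬ FreelyHomotopicLoops γ fun _ => y) :
    ∃ δ M, IsSimpleClosedGeodesic δ M ∧ FreelyHomotopicLoops γ fun t => δ (M * t) := by
  obtain ⟨Λ, _, i, κ, h⟩ := exists_isFiniteComponent (γ 0)
  have hr : 0 < r := by linarith [K.coe_nonneg]
  have hb : edist (γ 0) (γ 0) ≠ ⊤ := by simp
  have hlift : ∀ δ : ℝ → Λ, FreelyHomotopicLoops (κ ∘ γ) δ → FreelyHomotopicLoops γ (i ∘ δ) :=
    fun δ hδ => (hδ.map h.isometry.continuous).congr_left_of_inseparable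
      (h.inseparable_of_lipschitzWith hγ hb) hγper
  obtain ⟨δ, M, hMK, hδ⟩ := (h.isLengthSpace hlen).exists_isShortestLoop (h.hasSystoleGE hsys) hr
    (h.lipschitzWith_comp hγ hb) (hγper.comp κ) fun a ha => hγnull (i a) (hlift _ ha)
  exact ⟨i ∘ δ, M, (hδ.isSimpleClosedGeodesic (h.isLengthSpace hlen) (h.hasSystoleGE hsys)
    (hMK.trans_lt hKr)).comp_isometry h.isometry, hlift _ hδ.freelyHomotopicLoops⟩

end FiniteComponent

/-! ### Length metrics -/

theorem le_lengthDist {α : Type*} (ρ : α → α → ℝ≥0∞) (u v : α) : ρ u v ≤ lengthDist ρ u v := by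
  refine le_iInf fun ⟨γ, hγ₀, hγ₁, _⟩ => le_iSup_of_le 1 (le_iSup_of_le
    ⟨fun k => (k : ℕ), fun j k h => Nat.cast_le.2 h, fun k => ?_⟩ ?_)
  · fin_cases k <;> simp
  · simp [hγ₀, hγ₁]

section LengthMetric

variable {Y : Type*} [PseudoEMetricSpace Y] {γ : ℝ → Y} {s : Set ℝ} {a b : ℝ}

theorem rhoLength_edist_eq_eVariationOn (γ : ℝ → Y) (a b : ℝ) :
    rhoLength edist γ a b = eVariationOn γ (Icc a b) := by
  apply le_antisymm
  · refine iSup₂_le fun n ⟨c, hc, hcI⟩ => ?_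
    have hmono : Monotone fun k : ℕ => c ⟨min k n, by lia⟩ := fun j k hjk =>
      hc (Fin.mk_le_mk.2 (min_le_min_right n hjk))
    refine le_trans (Eq.le ?_) (eVariationOn.sum_le (n := n) hmono fun k => hcI _)
    rw [← Fin.sum_univ_eq_sum_range fun k =>
      edist (γ (c ⟨min (k + 1) n, by lia⟩)) (γ (c ⟨min k n, by lia⟩))]
    refine Finset.sum_congr rfl fun k _ => ?_
    rw [edist_comm]
    congr! 3 <;> ext <;> simp
  · refine iSup_le fun ⟨n, c, hc, hcI⟩ => le_iSup₂_of_le n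
      ⟨fun k => c k, fun j k h => hc h, fun k => hcI _⟩ (Eq.le ?_)
    rw [← Fin.sum_univ_eq_sum_range fun k => edist (γ (c (k + 1))) (γ (c k))]
    simp only [edist_comm, Fin.val_succ, Fin.val_castSucc]

theorem rhoContinuousOn_edist_iff :
    RhoContinuousOn edist γ a b ↔ ContinuousOn γ (Icc a b) := by
  refine forall₂_congr fun t _ => ?_
  simp only [ContinuousWithinAt, EMetric.tendsto_nhds, Metric.nhdsWithin_basis_ball.eventually_iff,
    edist_comm (γ t), and_self, mem_inter_iff, mem_ball, Real.dist_eq, and_imp]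
  exact forall₂_congr fun _ _ => exists_congr fun _ => and_congr_right fun _ =>
    forall_congr' fun _ => imp.swap

theorem lengthDist_edist_le_eVariationOn (hab : a ≤ b) (hγ : ContinuousOn γ (Icc a b)) :
    lengthDist edist (γ a) (γ b) ≤ eVariationOn γ (Icc a b) := by
  have hφ : Monotone fun t : ℝ => a + t * (b - a) := fun s t hst => by
    have := mul_le_mul_of_nonneg_right hst (sub_nonneg.2 hab)
    simpa
  have hmaps : MapsTo (fun t : ℝ => a + t * (b - a)) (Icc 0 1) (Icc a b) := fun t ht =>
    ⟨by simpa using hφ ht.1, by simpa using hφ ht.2⟩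
  refine (iInf_le _ ⟨fun t => γ (a + t * (b - a)), by simp, by simp,
    rhoContinuousOn_edist_iff.2 (hγ.comp (by fun_prop) hmaps)⟩).trans ?_
  rw [rhoLength_edist_eq_eVariationOn]
  exact eVariationOn.comp_le_of_monotoneOn γ _ (hφ.monotoneOn _) hmaps

theorem lengthDist_edist_self (u : Y) : lengthDist edist u u = 0 := by
  simpa [eVariationOn.subsingleton] using
    lengthDist_edist_le_eVariationOn (γ := fun _ => u) (le_refl (0 : ℝ)) continuousOn_const

theorem lengthDist_edist_comm_le (u v : Y) : lengthDist edist u v ≤ lengthDist edist v u := by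
  refine le_iInf fun ⟨γ, hγ₀, hγ₁, hγ⟩ => ?_
  have hmaps : MapsTo (fun t : ℝ => 1 - t) (Icc 0 1) (Icc 0 1) := fun t ht =>
    ⟨sub_nonneg.2 ht.2, sub_le_self 1 ht.1⟩
  have hle := lengthDist_edist_le_eVariationOn (γ := fun t => γ (1 - t)) zero_le_one
    ((rhoContinuousOn_edist_iff.1 hγ).comp (by fun_prop) hmaps)
  rw [sub_zero, sub_self, hγ₀, hγ₁] at hle
  rw [rhoLength_edist_eq_eVariationOn]
  exact hle.trans (eVariationOn.comp_le_of_antitoneOn γ _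
    (fun s _ t _ hst => sub_le_sub_left hst 1) hmaps)

theorem lengthDist_edist_triangle (u v w : Y) :
    lengthDist edist u w ≤ lengthDist edist u v + lengthDist edist v w := by
  refine ENNReal.le_iInf_add_iInf fun ⟨γ, hγ₀, hγ₁, hγ⟩ ⟨γ', hγ'₀, hγ'₁, hγ'⟩ => ?_
  rw [rhoContinuousOn_edist_iff] at hγ hγ'
  simp only [rhoLength_edist_eq_eVariationOn]
  set g := concat γ 1 γ' with hg
  have hleft : EqOn g γ (Icc 0 1) := fun t ht => concat_of_le ht.2
  have hright : EqOn g (fun t => γ' (t - 1)) (Icc 1 2) := fun t ht => by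
    rcases ht.1.eq_or_lt with rfl | ht'
    · simp only [hg, concat_of_le le_rfl, hγ₁, sub_self, hγ'₀]
    · exact concat_of_lt ht'
  have hmaps : MapsTo (fun t : ℝ => t - 1) (Icc 1 2) (Icc 0 1) := fun t ht =>
    ⟨by linarith [ht.1], by linarith [ht.2]⟩
  have hcont : ContinuousOn g (Icc 0 2) := by
    rw [← Icc_union_Icc_eq_Icc (zero_le_one' ℝ) one_le_two]
    exact (hγ.congr hleft).union_of_isClosed ((hγ'.comp (by fun_prop) hmaps).congr hright)
      isClosed_Icc isClosed_Icc
  have hg₂ : g 2 = w := by rw [hright ⟨one_le_two, le_rfl⟩, ← hγ'₁]; norm_num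
  have hsplit := eVariationOn.Icc_add_Icc g (s := univ) (zero_le_one' ℝ) one_le_two trivial
  simp only [univ_inter] at hsplit
  calc lengthDist edist u w = lengthDist edist (g 0) (g 2) := by
        rw [hg₂, hleft ⟨le_rfl, zero_le_one⟩, hγ₀]
    _ ≤ eVariationOn g (Icc 0 2) := lengthDist_edist_le_eVariationOn zero_le_two hcont
    _ = eVariationOn γ (Icc 0 1) + eVariationOn (fun t => γ' (t - 1)) (Icc 1 2) := by
        rw [← hsplit, eVariationOn.congr hleft, eVariationOn.congr hright]
    _ ≤ eVariationOn γ (Icc 0 1) + eVariationOn γ' (Icc 0 1) := by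
        gcongr
        exact eVariationOn.comp_le_of_monotoneOn γ' _
          (fun s _ t _ hst => sub_le_sub_right hst 1) hmaps

/-- The length metric of a pseudo-extended-metric space. -/
abbrev lengthPseudoEMetricSpace (Y : Type*) [PseudoEMetricSpace Y] : PseudoEMetricSpace Y where
  edist := lengthDist edist
  edist_self := lengthDist_edist_self
  edist_comm u v := (lengthDist_edist_comm_le u v).antisymm (lengthDist_edist_comm_le v u)
  edist_triangle := lengthDist_edist_triangle

theorem lipschitzWith_lengthPseudoEMetricSpace (hγ : LipschitzWith 1 γ) :
    @LipschitzWith _ _ _ (lengthPseudoEMetricSpace Y) 1 γ := by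
  have hle : ∀ ⦃s t⦄, s ≤ t → lengthDist edist (γ s) (γ t) ≤ edist s t := fun s t hst => by
    have hvar := (hγ.lipschitzOnWith (s := univ)).comp_eVariationOn_le (mapsTo_univ id (Icc s t))
    rw [eVariationOn_id_Icc, comp_id, ENNReal.coe_one, one_mul] at hvar
    rw [edist_comm s, edist_dist t, Real.dist_eq, abs_of_nonneg (sub_nonneg.2 hst)]
    exact (lengthDist_edist_le_eVariationOn hst hγ.continuous.continuousOn).trans hvar
  intro s t
  rw [ENNReal.coe_one, one_mul]
  rcases le_total s t with hst | hts
  · exact hle hst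
  · exact (lengthDist_edist_comm_le _ _).trans ((hle hts).trans_eq (edist_comm t s))

theorem lipschitzWith_one_of_forall_exists_Icc
    (h : ∀ t, ∃ ε > 0, ∀ a ∈ Icc (t - ε) (t + ε), ∀ b ∈ Icc (t - ε) (t + ε),
      edist (γ a) (γ b) ≤ edist a b) : LipschitzWith 1 γ := by
  have hcont : Continuous γ := continuous_iff_continuousAt.2 fun t => by
    obtain ⟨ε, hε, hlip⟩ := h t
    have hmem : Icc (t - ε) (t + ε) ∈ 𝓝 t := Icc_mem_nhds (by linarith) (by linarith)
    exact (LipschitzOnWith.continuousOn (K := 1) (s := Icc (t - ε) (t + ε))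
      fun a ha b hb => by simpa using hlip a ha b hb).continuousAt hmem
  have hle : ∀ ⦃a b⦄, a ≤ b → edist (γ a) (γ b) ≤ ENNReal.ofReal (b - a) := fun a b hab => by
    suffices hsub : Icc a b ⊆ {t | edist (γ a) (γ t) ≤ ENNReal.ofReal (t - a)} from
      hsub ⟨hab, le_rfl⟩
    have hclosed : IsClosed {t | edist (γ a) (γ t) ≤ ENNReal.ofReal (t - a)} :=
      isClosed_le (by fun_prop) (ENNReal.continuous_ofReal.comp (by fun_prop))
    refine IsClosed.Icc_subset_of_forall_mem_nhdsWithin (hclosed.inter isClosed_Icc) (by simp) ?_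
    rintro t ⟨hat, hta, -⟩
    obtain ⟨ε, hε, hlip⟩ := h t
    filter_upwards [Ioo_mem_nhdsGT (lt_add_of_pos_right t hε)] with s hs
    calc edist (γ a) (γ s) ≤ edist (γ a) (γ t) + edist (γ t) (γ s) := edist_triangle _ _ _
      _ ≤ ENNReal.ofReal (t - a) + ENNReal.ofReal (s - t) := by
        gcongr
        · exact hat
        · refine (hlip t ⟨by linarith, by linarith⟩ s ⟨by linarith [hs.1], hs.2.le⟩).trans_eq ?_
          rw [edist_comm, edist_dist, Real.dist_eq, abs_of_pos (sub_pos.2 hs.1)]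
      _ = ENNReal.ofReal (s - a) := by
        rw [← ENNReal.ofReal_add (sub_nonneg.2 hta) (sub_pos.2 hs.1).le, sub_add_sub_cancel']
  intro a b
  rw [ENNReal.coe_one, one_mul, edist_dist a, Real.dist_eq]
  rcases le_total a b with hab | hba
  · rw [abs_sub_comm, abs_of_nonneg (sub_nonneg.2 hab)]
    exact hle hab
  · rw [edist_comm, abs_of_nonneg (sub_nonneg.2 hba)]
    exact hle hba

theorem lengthDist_edist_le_abs_variationOnFromTo (hs : s.OrdConnected) (hγ : ContinuousOn γ s)
    (hbv : LocallyBoundedVariationOn γ s) (ha : a ∈ s) (hb : b ∈ s) :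
    lengthDist edist (γ a) (γ b) ≤ ENNReal.ofReal |variationOnFromTo γ s a b| := by
  wlog hab : a ≤ b generalizing a b
  · rw [variationOnFromTo.eq_neg_swap, abs_neg]
    exact (lengthDist_edist_comm_le _ _).trans (this hb ha (le_of_not_ge hab))
  have hsub := hs.out ha hb
  rw [abs_of_nonneg (variationOnFromTo.nonneg_of_le γ s hab), variationOnFromTo.eq_of_le γ s hab,
    ENNReal.ofReal_toReal (hbv a b ha hb), inter_eq_right.2 hsub]
  exact lengthDist_edist_le_eVariationOn hab (hγ.mono hsub)

theorem continuousOn_variationOnFromTo (hγ : ContinuousOn γ s) (hbv : BoundedVariationOn γ s)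
    (ha : a ∈ s) : ContinuousOn (variationOnFromTo γ s a) s := by
  intro t ht
  rw [ContinuousWithinAt, tendsto_iff_edist_tendsto_0]
  have hlim := (hbv.tendsto_eVariationOn_Icc_zero_left ((hγ t ht).mono inter_subset_left)).add
    (hbv.tendsto_eVariationOn_Icc_zero_right t ((hγ t ht).mono inter_subset_left))
  rw [add_zero] at hlim
  refine tendsto_of_tendsto_of_tendsto_of_le_of_le' tendsto_const_nhds hlim
    (Eventually.of_forall fun _ => zero_le) ?_
  filter_upwards [self_mem_nhdsWithin] with y hy
  rw [edist_dist, Real.dist_eq,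
    variationOnFromTo.sub_right hbv.locallyBoundedVariationOn ha hy ht]
  have hbv' := hbv.locallyBoundedVariationOn
  rcases le_total y t with hyt | hty
  · rw [variationOnFromTo.eq_of_ge γ s hyt, abs_neg, ENNReal.abs_toReal,
      ENNReal.ofReal_toReal (hbv' y t hy ht)]
    exact le_self_add
  · rw [variationOnFromTo.eq_of_le γ s hty, ENNReal.abs_toReal,
      ENNReal.ofReal_toReal (hbv' t y ht hy)]
    exact le_add_self

theorem isPseudoLengthSpace_lengthPseudoEMetricSpace (Y : Type*) [m : PseudoEMetricSpace Y] :
    @IsPseudoLengthSpace Y (lengthPseudoEMetricSpace Y) := by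
  intro u v r huv
  obtain ⟨⟨γ, rfl, rfl, hγ⟩, hlt⟩ := iInf_lt_iff.1 huv
  rw [rhoContinuousOn_edist_iff] at hγ
  rw [rhoLength_edist_eq_eVariationOn] at hlt
  have hbv : BoundedVariationOn γ (Icc 0 1) := hlt.ne_top
  have h0 : (0 : ℝ) ∈ Icc (0 : ℝ) 1 := by simp
  have h1 : (1 : ℝ) ∈ Icc (0 : ℝ) 1 := by simp
  set V := variationOnFromTo γ (Icc 0 1) 0 with hV
  have hV₀ : V 0 = 0 := variationOnFromTo.self _ _ _
  have hV₁ : 0 ≤ V 1 := variationOnFromTo.nonneg_of_le _ _ zero_le_one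
  have hdist : ∀ a ∈ Icc (0 : ℝ) 1, ∀ b ∈ Icc (0 : ℝ) 1,
      lengthDist edist (γ a) (γ b) ≤ ENNReal.ofReal |V b - V a| := fun a ha b hb => by
    rw [hV, variationOnFromTo.sub_right hbv.locallyBoundedVariationOn h0 hb ha]
    exact lengthDist_edist_le_abs_variationOnFromTo ordConnected_Icc hγ
      hbv.locallyBoundedVariationOn ha hb
  have hsurj : ∀ x : ℝ, ∃ t ∈ Icc (0 : ℝ) 1, V t = projIcc 0 (V 1) hV₁ x := fun x =>
    intermediate_value_Icc zero_le_one (continuousOn_variationOnFromTo hγ hbv h0)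
      (by rw [← hV, hV₀]; exact (projIcc 0 (V 1) hV₁ x).2)
  choose T hT hVT using hsurj
  refine ⟨γ ∘ T, V 1, fun x y => ?_, hV₁, ?_, ?_, ?_⟩
  · rw [ENNReal.coe_one, one_mul, edist_comm x, edist_dist y]
    refine (hdist _ (hT x) _ (hT y)).trans (ENNReal.ofReal_le_ofReal ?_)
    rw [hVT, hVT]
    exact abs_projIcc_sub_projIcc hV₁
  · rw [hV, variationOnFromTo.eq_of_le _ _ zero_le_one, inter_self]
    exact (ENNReal.lt_ofReal_iff_toReal_lt hbv).1 hlt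
  · refine le_antisymm ((hdist _ (hT 0) _ h0).trans_eq ?_) zero_le
    rw [hVT, projIcc_left, hV₀, sub_self, abs_zero, ENNReal.ofReal_zero]
  · refine le_antisymm ((hdist _ (hT (V 1)) _ h1).trans_eq ?_) zero_le
    rw [hVT, projIcc_right, sub_self, abs_zero, ENNReal.ofReal_zero]

theorem generateFrom_balls_eq (Y : Type*) [m : PseudoEMetricSpace Y] :
    TopologicalSpace.generateFrom {B : Set Y | ∃ u ε, 0 < ε ∧ B = {v | edist u v < ε}} =
      m.toUniformSpace.toTopologicalSpace := by
  refine (TopologicalSpace.isTopologicalBasis_of_isOpen_of_nhds ?_ ?_).eq_generateFrom.symm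
  · rintro _ ⟨u, ε, -, rfl⟩
    simp only [edist_comm u]
    exact isOpen_eball
  · intro u U hu hU
    obtain ⟨ε, hε, hεU⟩ := EMetric.isOpen_iff.1 hU u hu
    exact ⟨_, ⟨u, ε, hε, rfl⟩, by simpa using hε, fun v hv => hεU (by simpa [edist_comm] using hv)⟩

end LengthMetric

/-! ### Euclidean hinges and comparison angles -/

/-- The squared length of the third side of a Euclidean hinge with sides `a`, `b` and angle `θ`,
as given by the law of cosines. -/
def hingeSq (a b θ : ℝ) : ℝ := a ^ 2 + b ^ 2 - 2 * a * b * Real.cos θ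

theorem hingeSq_le_hingeSq_iff {a b θ₁ θ₂ : ℝ} (ha : 0 < a) (hb : 0 < b)
    (h₁ : θ₁ ∈ Icc 0 Real.pi) (h₂ : θ₂ ∈ Icc 0 Real.pi) :
    hingeSq a b θ₁ ≤ hingeSq a b θ₂ ↔ θ₁ ≤ θ₂ := by
  rw [hingeSq, hingeSq, sub_le_sub_iff_left, mul_le_mul_iff_right₀ (by positivity),
    Real.strictAntiOn_cos.le_iff_ge h₂ h₁]

theorem hingeSq_mul (k a b θ : ℝ) : hingeSq (k * a) (k * b) θ = k ^ 2 * hingeSq a b θ := by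
  rw [hingeSq, hingeSq]
  ring

theorem hingeSq_cevian_left (ρ α β : ℝ) :
    hingeSq (ρ * Real.sin β) (ρ * (Real.sin (α + β) / 2)) α =
      hingeSq (ρ * Real.sin β) (ρ * Real.sin α) (α + β) / 4 := by
  rw [hingeSq_mul, hingeSq_mul, hingeSq, hingeSq, Real.sin_add, Real.cos_add]
  linear_combination (ρ ^ 2 * Real.sin β ^ 2 * (-3 / 4)) * Real.cos_sq' α +
    (ρ ^ 2 * Real.sin α ^ 2 / 4) * Real.cos_sq' β

theorem hingeSq_cevian_right (ρ α β : ℝ) :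
    hingeSq (ρ * (Real.sin (α + β) / 2)) (ρ * Real.sin α) β =
      hingeSq (ρ * Real.sin β) (ρ * Real.sin α) (α + β) / 4 := by
  rw [hingeSq_mul, hingeSq_mul, hingeSq, hingeSq, Real.sin_add, Real.cos_add]
  linear_combination (ρ ^ 2 * Real.sin α ^ 2 * (-3 / 4)) * Real.cos_sq' β +
    (ρ ^ 2 * Real.sin β ^ 2 / 4) * Real.cos_sq' α

section ComparisonAngle

variable {X : Type*} [MetricSpace X] {x y z m : X} {θ : ℝ}

theorem compAngle_mem_Icc (x y z : X) : compAngle x y z ∈ Icc 0 Real.pi :=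
  ⟨Real.arccos_nonneg _, Real.arccos_le_pi _⟩

theorem compAngle_comm (x y z : X) : compAngle x y z = compAngle x z y := by
  rw [compAngle, compAngle, dist_comm y z, add_comm (dist x y ^ 2), mul_right_comm]

theorem compAngle_self (h : x ≠ y) : compAngle x y y = 0 := by
  have h' : dist x y ≠ 0 := dist_ne_zero.2 h
  rw [compAngle, dist_self, Real.arccos_eq_zero, le_div_iff₀ (by positivity)]
  exact le_of_eq (by ring)

theorem hingeSq_compAngle (hy : x ≠ y) (hz : x ≠ z) :
    hingeSq (dist x y) (dist x z) (compAngle x y z) = dist y z ^ 2 := by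
  have hy' : 0 < dist x y := dist_pos.2 hy
  have hz' : 0 < dist x z := dist_pos.2 hz
  have hsum : dist y z ≤ dist x y + dist x z := dist_triangle_left _ _ _
  have hdiff : |dist x y - dist x z| ≤ dist y z := by
    simpa only [dist_comm x] using abs_dist_sub_le y z x
  rw [hingeSq, compAngle, Real.cos_arccos, mul_div_cancel₀ _ (by positivity)]
  · ring
  · rw [le_div_iff₀ (by positivity)]
    nlinarith [sq_le_sq' (by linarith [dist_nonneg (x := y) (y := z)]) hsum]
  · rw [div_le_one (by positivity)]
    nlinarith [sq_le_sq.2 (hdiff.trans (le_abs_self _))]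

theorem compAngle_le_iff (hy : x ≠ y) (hz : x ≠ z) (hθ : θ ∈ Icc 0 Real.pi) :
    compAngle x y z ≤ θ ↔ dist y z ^ 2 ≤ hingeSq (dist x y) (dist x z) θ := by
  rw [← hingeSq_compAngle hy hz, hingeSq_le_hingeSq_iff (dist_pos.2 hy) (dist_pos.2 hz)
    (compAngle_mem_Icc x y z) hθ]

/- In the Euclidean triangle with these two sides and angle `α + β`, the cevian splitting the angle
into `α` and `β` is the median, so each of `dist y m`, `dist m z` is at most half the third side. -/
theorem compAngle_le_add {ρ α β : ℝ} (hρ : 0 < ρ) (hα : 0 < α) (hβ : 0 < β)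
    (hαβ : α + β < Real.pi) (hy : dist x y = ρ * Real.sin β) (hz : dist x z = ρ * Real.sin α)
    (hm : dist x m = ρ * (Real.sin (α + β) / 2)) (hym : compAngle x y m ≤ α)
    (hmz : compAngle x m z ≤ β) : compAngle x y z ≤ α + β := by
  have hsin : ∀ θ, 0 < θ → θ < Real.pi → 0 < Real.sin θ := fun _ => Real.sin_pos_of_pos_of_lt_pi
  have hxy : x ≠ y := dist_pos.1 (hy ▸ mul_pos hρ (hsin β hβ (by linarith)))
  have hxz : x ≠ z := dist_pos.1 (hz ▸ mul_pos hρ (hsin α hα (by linarith)))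
  have hxm : x ≠ m := dist_pos.1 (hm ▸ mul_pos hρ (half_pos (hsin _ (by linarith) hαβ)))
  rw [compAngle_le_iff hxy hxm ⟨hα.le, by linarith⟩, hy, hm, hingeSq_cevian_left] at hym
  rw [compAngle_le_iff hxm hxz ⟨hβ.le, by linarith⟩, hm, hz, hingeSq_cevian_right] at hmz
  rw [compAngle_le_iff hxy hxz ⟨by linarith, hαβ.le⟩, hy, hz]
  have htri : dist y z ^ 2 ≤ (dist y m + dist m z) ^ 2 := by
    gcongr
    exact dist_triangle y m z
  linarith [sq_nonneg (dist y m - dist m z)]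

end ComparisonAngle

/-! ### Angles in CAT(0) spaces -/

section CAT0

variable {X : Type*} [MetricSpace X] {f g : ℝ → X} {s t s' t' : ℝ}

theorem nonpos_of_midpoint_convex {ψ : ℝ → ℝ} (hψ : ContinuousOn ψ (Icc 0 1))
    (hmid : ∀ a ∈ Icc (0 : ℝ) 1, ∀ b ∈ Icc (0 : ℝ) 1, ψ ((a + b) / 2) ≤ (ψ a + ψ b) / 2)
    (h₀ : ψ 0 ≤ 0) (h₁ : ψ 1 ≤ 0) {l : ℝ} (hl : l ∈ Icc (0 : ℝ) 1) : ψ l ≤ 0 := by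
  obtain ⟨m, hm, hmax⟩ := isCompact_Icc.exists_isMaxOn ⟨l, hl⟩ hψ
  refine (hmax hl).trans ?_
  rcases le_total m (1 / 2) with hm' | hm'
  · have hmem : 2 * m ∈ Icc (0 : ℝ) 1 := ⟨by linarith [hm.1], by linarith⟩
    have hconv := hmid 0 (by simp) _ hmem
    rw [zero_add, mul_div_cancel_left₀ m two_ne_zero] at hconv
    linarith [isMaxOn_iff.1 hmax _ hmem]
  · have hmem : 2 * m - 1 ∈ Icc (0 : ℝ) 1 := ⟨by linarith, by linarith [hm.2]⟩
    have hconv := hmid 1 (by simp) _ hmem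
    rw [add_sub_cancel, mul_div_cancel_left₀ m two_ne_zero] at hconv
    linarith [isMaxOn_iff.1 hmax _ hmem]

theorem IsGeodesicOn.mono {A B : Set ℝ} (hf : IsGeodesicOn f B) (h : A ⊆ B) : IsGeodesicOn f A :=
  fun a ha b hb => hf a (h ha) b (h hb)

theorem IsGeodesicOn.continuousOn {A : Set ℝ} (hf : IsGeodesicOn f A) : ContinuousOn f A :=
  (LipschitzOnWith.of_dist_le_mul (K := 1) fun a ha b hb => by
    rw [hf a ha b hb, Real.dist_eq, NNReal.coe_one, one_mul]).continuousOn

theorem IsGeodesicOn.dist_zero_eq (hf : IsGeodesicOn f (Icc 0 s)) (hs : 0 ≤ s) :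
    dist (f 0) (f s) = s := by
  rw [hf 0 ⟨le_rfl, hs⟩ s ⟨hs, le_rfl⟩, zero_sub, abs_neg, abs_of_nonneg hs]

theorem IsGeodesicOn.apply_zero_ne (hf : IsGeodesicOn f (Icc 0 s)) (hs : 0 < s) : f 0 ≠ f s :=
  dist_pos.1 ((hf.dist_zero_eq hs.le).symm ▸ hs)

theorem IsGeodesicOn.isMidpoint {A : Set ℝ} {a b : ℝ} (hf : IsGeodesicOn f A) (ha : a ∈ A)
    (hb : b ∈ A) (hm : (a + b) / 2 ∈ A) : IsMidpoint (f ((a + b) / 2)) (f a) (f b) := by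
  rw [IsMidpoint, hf _ ha _ hm, hf _ hm _ hb, hf _ ha _ hb, ← abs_two (α := ℝ), ← abs_div, abs_two]
  constructor <;> ring_nf

theorem IsCAT0.dist_sq_le (hX : IsCAT0 X) (hs : 0 ≤ s) (hf : IsGeodesicOn f (Icc 0 s)) (y : X)
    {l : ℝ} (hl : l ∈ Icc (0 : ℝ) 1) :
    dist y (f (l * s)) ^ 2 ≤
      (1 - l) * dist y (f 0) ^ 2 + l * dist y (f s) ^ 2 - l * (1 - l) * s ^ 2 := by
  have hmaps : MapsTo (fun l => l * s) (Icc 0 1) (Icc 0 s) := fun l hl =>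
    ⟨mul_nonneg hl.1 hs, mul_le_of_le_one_left hs hl.2⟩
  have hcont : ContinuousOn (fun l => f (l * s)) (Icc 0 1) :=
    hf.continuousOn.comp (by fun_prop) hmaps
  have hdist : ContinuousOn (fun l => dist y (f (l * s))) (Icc 0 1) :=
    (continuous_const.dist continuous_id).comp_continuousOn hcont
  have hnonpos := nonpos_of_midpoint_convex
    (ψ := fun l => dist y (f (l * s)) ^ 2 -
      ((1 - l) * dist y (f 0) ^ 2 + l * dist y (f s) ^ 2 - l * (1 - l) * s ^ 2))
    (by fun_prop) (fun a ha b hb => ?_) (by simp) (by simp) hl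
  · exact sub_nonpos.1 hnonpos
  · have hmid : (a + b) / 2 * s = (a * s + b * s) / 2 := by ring
    have hCN := hX.2 y _ _ _ (hf.isMidpoint (hmaps ha) (hmaps hb)
      (hmid ▸ hmaps ⟨by linarith [ha.1, hb.1], by linarith [ha.2, hb.2]⟩))
    rw [hf _ (hmaps ha) _ (hmaps hb), sq_abs] at hCN
    rw [hmid]
    linarith

theorem IsCAT0.compAngle_le_left (hX : IsCAT0 X) (h₀ : f 0 = g 0) (hf : IsGeodesicOn f (Icc 0 s))
    (hg : IsGeodesicOn g (Icc 0 t)) (hs' : 0 < s') (hss : s' ≤ s) (ht : 0 < t) :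
    compAngle (f 0) (f s') (g t) ≤ compAngle (f 0) (f s) (g t) := by
  have hs : 0 < s := hs'.trans_le hss
  have hf' := hf.mono (Icc_subset_Icc_right hss)
  have hgt : f 0 ≠ g t := h₀ ▸ hg.apply_zero_ne ht
  have hdist_g : dist (f 0) (g t) = t := by rw [h₀, hg.dist_zero_eq ht.le]
  have hconv := hX.dist_sq_le hs.le hf (g t) (l := s' / s)
    ⟨by positivity, (div_le_one hs).2 hss⟩
  have hhinge := hingeSq_compAngle (hf.apply_zero_ne hs) hgt
  rw [compAngle_le_iff (hf'.apply_zero_ne hs') hgt (compAngle_mem_Icc _ _ _),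
    hf'.dist_zero_eq hs'.le, hdist_g]
  rw [hf.dist_zero_eq hs.le, hdist_g] at hhinge
  rw [div_mul_cancel₀ _ hs.ne', dist_comm (g t) (f 0), hdist_g, dist_comm (g t), dist_comm (g t),
    ← hhinge] at hconv
  refine hconv.trans_eq ?_
  rw [hingeSq, hingeSq]
  field

theorem IsCAT0.compAngle_le_compAngle (hX : IsCAT0 X) (h₀ : f 0 = g 0)
    (hf : IsGeodesicOn f (Icc 0 s)) (hg : IsGeodesicOn g (Icc 0 t)) (hs' : 0 < s') (hss : s' ≤ s)
    (ht' : 0 < t') (htt : t' ≤ t) :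
    compAngle (f 0) (f s') (g t') ≤ compAngle (f 0) (f s) (g t) := by
  refine le_trans ?_ (hX.compAngle_le_left h₀ hf hg hs' hss (ht'.trans_le htt))
  rw [compAngle_comm, compAngle_comm (f 0) (f s'), h₀]
  exact hX.compAngle_le_left h₀.symm hg (hf.mono (Icc_subset_Icc_right hss)) ht' htt hs'

theorem IsCAT0.dist_mul_le (hX : IsCAT0 X) (h₀ : f 0 = g 0) (hf : IsGeodesicOn f (Icc 0 t))
    (hg : IsGeodesicOn g (Icc 0 t)) (hs : 0 < s) (hst : s ≤ t) :
    dist (f s) (g s) * t ≤ s * dist (f t) (g t) := by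
  have ht : 0 < t := hs.trans_le hst
  have hf' := hf.mono (Icc_subset_Icc_right hst)
  have hg' := hg.mono (Icc_subset_Icc_right hst)
  have hangle := hX.compAngle_le_compAngle h₀ hf hg hs hst hs hst
  rw [compAngle_le_iff (hf'.apply_zero_ne hs) (h₀ ▸ hg'.apply_zero_ne hs)
    (compAngle_mem_Icc _ _ _), hf'.dist_zero_eq hs.le, h₀, hg'.dist_zero_eq hs.le] at hangle
  have hhinge := hingeSq_compAngle (hf.apply_zero_ne ht) (h₀ ▸ hg.apply_zero_ne ht)
  rw [hf.dist_zero_eq ht.le, h₀, hg.dist_zero_eq ht.le] at hhinge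
  refine abs_le_of_sq_le_sq' ?_ (by positivity) |>.2
  calc (dist (f s) (g s) * t) ^ 2 = t ^ 2 * dist (f s) (g s) ^ 2 := by ring
    _ ≤ t ^ 2 * hingeSq s s (compAngle (g 0) (f t) (g t)) := by gcongr
    _ = s ^ 2 * hingeSq t t (compAngle (g 0) (f t) (g t)) := by
      rw [← hingeSq_mul, ← hingeSq_mul, mul_comm]
    _ = (s * dist (f t) (g t)) ^ 2 := by rw [hhinge, mul_pow]

theorem IsCAT0.eq_of_rayClass_eq (hX : IsCAT0 X) (hf : IsRay f) (hg : IsRay g) (h₀ : f 0 = g 0)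
    (h : rayClass hf = rayClass hg) (hs : 0 ≤ s) : f s = g s := by
  obtain ⟨C, hC⟩ : Asymptotic f g := Quotient.exact h
  rcases hs.eq_or_lt with rfl | hs
  · exact h₀
  have hle : ∀ᶠ t in atTop, dist (f s) (g s) ≤ s * C / t := by
    filter_upwards [eventually_ge_atTop s] with t hst
    have ht : 0 < t := hs.trans_le hst
    rw [le_div_iff₀ ht]
    refine (hX.dist_mul_le h₀ (hf.mono Icc_subset_Ici_self) (hg.mono Icc_subset_Ici_self)
      hs hst).trans ?_
    gcongr
    exact hC t ht.le
  exact dist_le_zero.1 (ge_of_tendsto (tendsto_const_nhds.div_atTop tendsto_id) hle)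

end CAT0

/-! ### The angle metric on the link -/

section Link

variable {X : Type*} [MetricSpace X] {x : X} {f g : ℝ → X} {s t η : ℝ}

theorem exists_germClass_eq (u : LinkSpace x) :
    ∃ (f : ℝ → X) (hf : IsGeodGermFrom x f), germClass hf = u :=
  Quotient.inductionOn u fun f => ⟨f.1, f.2, rfl⟩

theorem IsGeodGermFrom.eventually_isGeodesicOn (hf : IsGeodGermFrom x f) :
    ∀ᶠ r in 𝓝[>] 0, IsGeodesicOn f (Icc 0 r) := by
  obtain ⟨-, ε, hε, hfε⟩ := hf
  filter_upwards [Ioo_mem_nhdsGT hε] with r hr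
  exact hfε.mono (Icc_subset_Icc_right hr.2.le)

theorem linkAngle_nonneg (u v : LinkSpace x) : 0 ≤ linkAngle x u v := by
  apply Real.sInf_nonneg
  rintro _ ⟨f, g, _, _, s, t, _, _, -, -, -, -, -, -, -, -, rfl⟩
  exact (compAngle_mem_Icc _ _ _).1

theorem linkAngle_le_compAngle (hf : IsGeodGermFrom x f) (hg : IsGeodGermFrom x g)
    (hs : 0 < s) (ht : 0 < t) (hfs : IsGeodesicOn f (Icc 0 s)) (hgt : IsGeodesicOn g (Icc 0 t)) :
    linkAngle x (germClass hf) (germClass hg) ≤ compAngle x (f s) (g t) := by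
  refine csInf_le ⟨0, ?_⟩
    ⟨f, g, hf, hg, s, t, s, t, rfl, rfl, hs, le_rfl, ht, le_rfl, hfs, hgt, rfl⟩
  rintro _ ⟨f, g, _, _, s, t, _, _, -, -, -, -, -, -, -, -, rfl⟩
  exact (compAngle_mem_Icc _ _ _).1

theorem IsCAT0.eventually_compAngle_lt (hX : IsCAT0 X) (hf : IsGeodGermFrom x f)
    (hg : IsGeodGermFrom x g) (hη : linkAngle x (germClass hf) (germClass hg) < η) :
    ∀ᶠ r in 𝓝[>] 0, ∀ s ∈ Ioc 0 r, ∀ t ∈ Ioc 0 r, compAngle x (f s) (g t) < η := by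
  obtain ⟨r, ⟨hfr, hgr⟩, hr⟩ := ((hf.eventually_isGeodesicOn.and hg.eventually_isGeodesicOn).and
    self_mem_nhdsWithin).exists
  obtain ⟨_, ⟨f', g', hf', hg', s, t, a, b, hff', hgg', hs, hsa, ht, htb, hfa, hgb, rfl⟩, hlt⟩ :=
    exists_lt_of_csInf_lt
      (by exact ⟨_, f, g, hf, hg, r, r, r, r, rfl, rfl, hr, le_rfl, hr, le_rfl, hfr, hgr, rfl⟩) hη
  obtain ⟨εf, hεf, heqf⟩ := Quotient.exact hff'
  obtain ⟨εg, hεg, heqg⟩ := Quotient.exact hgg'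
  filter_upwards [Ioo_mem_nhdsGT hs, Ioo_mem_nhdsGT ht, Ioo_mem_nhdsGT hεf, Ioo_mem_nhdsGT hεg]
    with r hrs hrt hrf hrg s' hs' t' ht'
  have hf_eq : f' s' = f s' := heqf s' ⟨hs'.1.le, hs'.2.trans hrf.2.le⟩
  have hg_eq : g' t' = g t' := heqg t' ⟨ht'.1.le, ht'.2.trans hrg.2.le⟩
  have hmono := hX.compAngle_le_compAngle (hf'.1.trans hg'.1.symm)
    (hfa.mono (Icc_subset_Icc_right hsa)) (hgb.mono (Icc_subset_Icc_right htb))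
    hs'.1 (hs'.2.trans hrs.2.le) ht'.1 (ht'.2.trans hrt.2.le)
  rw [hf'.1, hf_eq, hg_eq] at hmono
  exact hmono.trans_lt hlt

theorem linkAngle_le_pi (u v : LinkSpace x) : linkAngle x u v ≤ Real.pi := by
  obtain ⟨f, hf, rfl⟩ := exists_germClass_eq u
  obtain ⟨g, hg, rfl⟩ := exists_germClass_eq v
  obtain ⟨r, ⟨hfr, hgr⟩, hr⟩ := ((hf.eventually_isGeodesicOn.and hg.eventually_isGeodesicOn).and
    self_mem_nhdsWithin).exists
  exact (linkAngle_le_compAngle hf hg hr hr hfr hgr).trans (compAngle_mem_Icc _ _ _).2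

theorem linkAngle_self (u : LinkSpace x) : linkAngle x u u = 0 := by
  obtain ⟨f, hf, rfl⟩ := exists_germClass_eq u
  obtain ⟨r, hfr, hr⟩ := (hf.eventually_isGeodesicOn.and self_mem_nhdsWithin).exists
  refine le_antisymm ?_ (linkAngle_nonneg _ _)
  exact (linkAngle_le_compAngle hf hf hr hr hfr hfr).trans_eq
    (compAngle_self (hf.1 ▸ hfr.apply_zero_ne hr))

theorem linkAngle_comm (u v : LinkSpace x) : linkAngle x u v = linkAngle x v u := by
  unfold linkAngle
  congr 1
  ext θ
  constructor <;>
  · rintro ⟨f, g, hf, hg, s, t, a, b, hu, hv, hs, hsa, ht, htb, hfa, hgb, rfl⟩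
    exact ⟨g, f, hg, hf, t, s, b, a, hv, hu, ht, htb, hs, hsa, hgb, hfa, compAngle_comm _ _ _⟩

theorem IsCAT0.linkAngle_le_add (hX : IsCAT0 X) {u v w : LinkSpace x} {α β : ℝ}
    (hαβ : α + β < Real.pi) (huv : linkAngle x u v < α) (hvw : linkAngle x v w < β) :
    linkAngle x u w ≤ α + β := by
  have hα : 0 < α := (linkAngle_nonneg _ _).trans_lt huv
  have hβ : 0 < β := (linkAngle_nonneg _ _).trans_lt hvw
  obtain ⟨f, hf, rfl⟩ := exists_germClass_eq u
  obtain ⟨h, hh, rfl⟩ := exists_germClass_eq v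
  obtain ⟨g, hg, rfl⟩ := exists_germClass_eq w
  obtain ⟨ρ, ⟨⟨⟨⟨hfρ, hhρ⟩, hgρ⟩, hfh⟩, hhg⟩, hρ : 0 < ρ⟩ :=
    ((((hf.eventually_isGeodesicOn.and hh.eventually_isGeodesicOn).and
      hg.eventually_isGeodesicOn).and (hX.eventually_compAngle_lt hf hh huv)).and
      (hX.eventually_compAngle_lt hh hg hvw) |>.and self_mem_nhdsWithin).exists
  have hmem : ∀ {c}, 0 < c → c ≤ 1 → ρ * c ∈ Ioc 0 ρ := fun hc hc' =>
    ⟨mul_pos hρ hc, mul_le_of_le_one_right hρ.le hc'⟩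
  have hsin : ∀ {θ}, 0 < θ → θ < Real.pi → 0 < Real.sin θ := Real.sin_pos_of_pos_of_lt_pi
  have hy := hmem (hsin hβ (by linarith)) (Real.sin_le_one β)
  have hz := hmem (hsin hα (by linarith)) (Real.sin_le_one α)
  have hm := hmem (half_pos (hsin (add_pos hα hβ) hαβ)) (by linarith [Real.sin_le_one (α + β)])
  have hdist : ∀ {k : ℝ → X}, IsGeodGermFrom x k → IsGeodesicOn k (Icc 0 ρ) → ∀ {c}, c ∈ Ioc 0 ρ →
      dist x (k c) = c := fun hk hkρ c hc =>
    hk.1 ▸ (hkρ.mono (Icc_subset_Icc_right hc.2)).dist_zero_eq hc.1.le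
  exact (linkAngle_le_compAngle hf hg hy.1 hz.1 (hfρ.mono (Icc_subset_Icc_right hy.2))
    (hgρ.mono (Icc_subset_Icc_right hz.2))).trans (compAngle_le_add hρ hα hβ hαβ
      (hdist hf hfρ hy) (hdist hg hgρ hz) (hdist hh hhρ hm) (hfh _ hy _ hm).le (hhg _ hm _ hz).le)

theorem IsCAT0.linkAngle_triangle (hX : IsCAT0 X) (u v w : LinkSpace x) :
    linkAngle x u w ≤ linkAngle x u v + linkAngle x v w := by
  refine le_of_forall_pos_le_add fun ε hε => ?_
  rcases le_or_gt Real.pi (linkAngle x u v + linkAngle x v w + ε) with hπ | hπ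
  · exact (linkAngle_le_pi u w).trans hπ
  · exact (hX.linkAngle_le_add (v := v) (by linarith) (lt_add_of_pos_right _ (half_pos hε))
      (lt_add_of_pos_right _ (half_pos hε))).trans_eq (by ring)

theorem linkAngle_le_titsAngle (hf : IsRay f) (hg : IsRay g) (hf' : IsGeodGermFrom x f)
    (hg' : IsGeodGermFrom x g) :
    linkAngle x (germClass hf') (germClass hg') ≤ titsAngle (rayClass hf) (rayClass hg) := by
  refine (linkAngle_le_compAngle hf' hg' one_pos one_pos
    (hf.mono Icc_subset_Ici_self) (hg.mono Icc_subset_Ici_self)).trans ?_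
  refine le_csSup ⟨Real.pi, ?_⟩
    ⟨f, g, hf, hg, 1, hf'.1.trans hg'.1.symm, rfl, rfl, one_pos, by rw [hf'.1]⟩
  rintro _ ⟨f, g, _, _, t, -, -, -, -, rfl⟩
  exact (compAngle_mem_Icc _ _ _).2

end Link

/-! ### The log loop -/

section LogLoop

variable {X : Type*} [MetricSpace X] {x : X} {σ : ℝ → IdealBoundary X} {L : ℝ}
  {γ γ' : ℝ → LinkSpace x}

/-- The angle metric on the link of a CAT(0) space. -/
abbrev linkAnglePseudoEMetricSpace (hX : IsCAT0 X) (x : X) : PseudoEMetricSpace (LinkSpace x) where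
  edist u v := ENNReal.ofReal (linkAngle x u v)
  edist_self u := by rw [linkAngle_self, ENNReal.ofReal_zero]
  edist_comm u v := by rw [linkAngle_comm]
  edist_triangle u v w := by
    rw [← ENNReal.ofReal_add (linkAngle_nonneg _ _) (linkAngle_nonneg _ _)]
    exact ENNReal.ofReal_le_ofReal (hX.linkAngle_triangle u v w)

/-- The link metric `linkDist x` of a CAT(0) space, with `linkTopology x` as its topology. -/
abbrev linkPseudoEMetricSpace (hX : IsCAT0 X) (x : X) : PseudoEMetricSpace (LinkSpace x) :=
  let m := @lengthPseudoEMetricSpace _ (linkAnglePseudoEMetricSpace hX x)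
  { m with
    toUniformSpace := m.toUniformSpace.replaceTopology (@generateFrom_balls_eq _ m)
    uniformity_edist := m.uniformity_edist }

theorem isPseudoLengthSpace_linkPseudoEMetricSpace (hX : IsCAT0 X) (x : X) :
    @IsPseudoLengthSpace _ (linkPseudoEMetricSpace hX x) :=
  @isPseudoLengthSpace_lengthPseudoEMetricSpace _ (linkAnglePseudoEMetricSpace hX x)

theorem IsLogLoop.unique (hX : IsCAT0 X) (h : IsLogLoop x σ γ) (h' : IsLogLoop x σ γ') :
    γ = γ' := by
  funext t
  obtain ⟨f, hf, hxf, hfσ, hfγ⟩ := h t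
  obtain ⟨g, hg, hxg, hgσ, hgγ⟩ := h' t
  rw [hfγ, hgγ]
  exact Quotient.sound ⟨1, one_pos, fun s hs =>
    hX.eq_of_rayClass_eq hf hg (hxf.1.trans hxg.1.symm) (hfσ.trans hgσ.symm) hs.1⟩

theorem IsLogLoop.linkAngle_le_titsDist (h : IsLogLoop x σ γ) (s t : ℝ) :
    ENNReal.ofReal (linkAngle x (γ s) (γ t)) ≤ titsDist (σ s) (σ t) := by
  obtain ⟨f, hf, hxf, hfσ, hfγ⟩ := h s
  obtain ⟨g, hg, hxg, hgσ, hgγ⟩ := h t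
  rw [hfγ, hgγ, ← hfσ, ← hgσ]
  exact (ENNReal.ofReal_le_ofReal (linkAngle_le_titsAngle hf hg hxf hxg)).trans
    (le_lengthDist _ _ _)

theorem IsLogLoop.lipschitzWith (hX : IsCAT0 X) (hσ : IsClosedTitsGeodesic σ L)
    (h : IsLogLoop x σ γ) : @LipschitzWith _ _ _ (linkPseudoEMetricSpace hX x) 1 γ := by
  let _ := linkAnglePseudoEMetricSpace hX x
  refine lipschitzWith_lengthPseudoEMetricSpace (lipschitzWith_one_of_forall_exists_Icc fun t => ?_)
  obtain ⟨ε, hε, hmin⟩ := hσ.2.2 t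
  refine ⟨ε, hε, fun a ha b hb => (h.linkAngle_le_titsDist a b).trans_eq ?_⟩
  rw [hmin a ha b hb, edist_dist, Real.dist_eq]

end LogLoop

theorem not_freelyHomotopicLoops_const_of_loopRepsNontrivialH1 {X : Type*} [MetricSpace X] {x : X}
    {γ : ℝ → LinkSpace x} {L : ℝ} (h : LoopRepsNontrivialH1 x γ L) (u : LinkSpace x) :
    ¬ FreelyHomotopicLoops (fun s => γ (L * s)) fun _ => u := by
  obtain ⟨p, hp, hp_ne⟩ := h
  exact fun hu => not_loopNontrivialInH1_of_homotopic_refl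
    (homotopic_refl_of_freelyHomotopicLoops_const hu p hp) hp_ne

end CAT0SC

theorem log_loop_freely_homotopic_to_closed_geodesic_general
    {X : Type*} [MetricSpace X] (hX : IsCAT0 X) {σ : ℝ → IdealBoundary X} {L : ℝ}
    (hσ : IsClosedTitsGeodesic σ L) (hL : L < 4 * Real.pi) {x : X} (hx : x ∈ suppSet σ L)
    (hlink : ∀ γ : ℝ → LinkSpace x, Continuous γ → (∀ t, γ (t + 1) = γ t) →
      InjOn γ (Ico 0 1) → ENNReal.ofReal (2 * Real.pi) ≤ loopLinkLength x γ)
    {γ : ℝ → LinkSpace x} (hγ : IsLogLoop x σ γ) :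
    ∃ (δ : ℝ → LinkSpace x) (M : ℝ), IsSimpleClosedLinkGeodesic x δ M ∧
      FreelyHomotopicLoops (fun s : ℝ => γ (L * s)) (fun s : ℝ => δ (M * s)) := by
  obtain ⟨γ', hγ', hper, hnontriv⟩ := hx
  obtain rfl := hγ.unique hX hγ'
  let _ := linkPseudoEMetricSpace hX x
  have hlip := lipschitzWith_comp_mul_left (hγ.lipschitzWith hX hσ) hσ.1.le
  obtain ⟨δ, M, hδ, hγδ⟩ :=
    (isPseudoLengthSpace_linkPseudoEMetricSpace hX x).exists_isSimpleClosedGeodesic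
      (fun γ hγ hper hinj => (hlink γ hγ hper hinj).trans_eq
        (rhoLength_edist_eq_eVariationOn γ 0 1))
      (by rwa [Real.coe_toNNReal L hσ.1.le]) hlip (periodic_comp_mul_left hper)
      (not_freelyHomotopicLoops_const_of_loopRepsNontrivialH1 hnontriv)
  exact ⟨δ, M, ⟨hδ.pos, hδ.periodic, hδ.locally_minimising, hδ.injOn⟩, hγδ⟩

/-- Let `X` be a locally compact CAT(0) 2-complex and let `c` be a
simple closed geodesic in `∂_T X` of length strictly less than `4π`. Then for every
`x ∈ supp(c)`, the loop `log_x(c)` is freely homotopic in `Link(X,x)` to a simple closed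
geodesic in `Link(X,x)`. -/
theorem log_loop_freely_homotopic_to_closed_geodesic
    {X : Type*} [MetricSpace X] [LocallyCompactSpace X]
    (S : PolygonalComplex X) (hS : IsCAT0TwoComplex S)
    (σ : ℝ → IdealBoundary X) (L : ℝ) (hσ : IsSimpleClosedTitsGeodesic σ L)
    (hL : L < 4 * Real.pi) :
    ∀ x ∈ suppSet σ L, ∀ γ : ℝ → LinkSpace x, IsLogLoop x σ γ → (∀ t, γ (t + L) = γ t) →
      ∃ (δ : ℝ → LinkSpace x) (M : ℝ), IsSimpleClosedLinkGeodesic x δ M ∧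
        FreelyHomotopicLoops (fun s : ℝ => γ (L * s)) (fun s : ℝ => δ (M * s)) := by
  exact fun x hx _ hγ _ => log_loop_freely_homotopic_to_closed_geodesic_general hS.cat0 hσ.1 hL hx
    (hS.link_condition x) hγ
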